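/- arXiv:0904.2384 — 4 statements merged into one kernel-verified Lean document; each statement's English description precedes it below -/
import Mathlib

section
/- Let E be a complex Banach space and V ⊆ E a balanced subset (λv ∈ V whenever v ∈ V and |λ| ≤ 1). If x ∈ E satisfies |Q(x)| ≤ sup_{v∈V}|Q(v)| for every n ∈ ℕ and every continuous n-homogeneous polynomial Q on E, then |P(x)| ≤ sup_{v∈V}|P(v)| for every continuous polynomial P on E. In other words, the polynomial hull of a balanced set equals the intersection of its homogeneous polynomial hulls. -/
/-!
Write `P = ∑ Qₖ` with `Qₖ` homogeneous of degree `k`, and for `v : E` let `p v` be the one-variable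
polynomial `∑ Qₖ(v) Xᵏ`, so that `P v = (p v)(1)` and, by homogeneity, `P (c v) = (p v)(c)`.
If `|P| ≤ C` on the balanced set `V`, then for `v ∈ V` the polynomial `p v` is bounded by `C` on the
unit circle, so Parseval's identity bounds each of its coefficients by `C`
(`norm_coeff_le_of_circle`). By hypothesis these bounds pass to `x`, and adding them up gives only
`|P x| ≤ (deg + 1) C` (`norm_eval_one_le`).

The constant is removed by the tensor power trick. The coefficients of `(p v)ᵐ` are again continuous
homogeneous polynomials in `v` (`IsGradedFamily.pow`), so the same estimate applied to `Pᵐ` yields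
`|P x|ᵐ ≤ (m N + 1) Cᵐ` for every `m`; since the left side would otherwise grow exponentially
faster, `|P x| ≤ C`.
-/

open Set Metric

variable {E : Type*} [NormedAddCommGroup E] [NormedSpace ℂ E]

/-- A continuous `n`-homogeneous polynomial: `x ↦ M (x, …, x)` for a continuous `n`-linear map. -/
def IsHomogPoly (n : ℕ) (Q : E → ℂ) : Prop :=
  ∃ M : ContinuousMultilinearMap ℂ (fun _ : Fin n => E) ℂ, ∀ x, Q x = M fun _ => x

/-- A continuous polynomial: a finite sum of continuous homogeneous polynomials. -/
def IsContPoly (P : E → ℂ) : Prop :=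
  ∃ (N : ℕ) (Q : ℕ → E → ℂ), (∀ k, IsHomogPoly k (Q k)) ∧
    ∀ x, P x = ∑ k ∈ Finset.range (N + 1), Q k x

/-- `A` is `U`-bounded: contained in `U`, norm bounded, uniformly away from the boundary. -/
def UBounded (U A : Set E) : Prop :=
  A ⊆ U ∧ Bornology.IsBounded A ∧ ∃ d > 0, ∀ a ∈ A, ball a d ⊆ U

/-- `f` is in `H_b(U)`: analytic on `U` and bounded on every `U`-bounded set. -/
def MemHb (U : Set E) (f : E → ℂ) : Prop :=
  AnalyticOnNhd ℂ f U ∧ ∀ A : Set E, UBounded U A → ∃ C : ℝ, ∀ x ∈ A, ‖f x‖ ≤ C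

/-- Polynomial hull `Â_P` of a set `A`: points where each continuous polynomial is dominated by
its sup over `A` (formulated via upper bounds). -/
def polyHull (A : Set E) : Set E :=
  {x | ∀ P : E → ℂ, IsContPoly P → ∀ C : ℝ, (∀ a ∈ A, ‖P a‖ ≤ C) → ‖P x‖ ≤ C}

/-- The set `U_n = {x ∈ U : ‖x‖ ≤ n, ball x (1/n) ⊆ U}`. -/
def UNat (U : Set E) (n : ℕ) : Set E :=
  {x | x ∈ U ∧ ‖x‖ ≤ (n : ℝ) ∧ ball x (1 / (n : ℝ)) ⊆ U}

/-- `Û_P := ⋃ n, (U_n)̂_P`. -/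
def UhatP (U : Set E) : Set E := ⋃ n : ℕ, polyHull (UNat U n)

/-- A continuous character of `H_b(U)`. -/
def IsHbChar (U : Set E) (φ : (E → ℂ) → ℂ) : Prop :=
  φ (fun _ => 1) = 1 ∧
  (∀ f g, MemHb U f → MemHb U g → φ (f + g) = φ f + φ g) ∧
  (∀ (c : ℂ) (f), MemHb U f → φ (c • f) = c * φ f) ∧
  (∀ f g, MemHb U f → MemHb U g → φ (f * g) = φ f * φ g) ∧
  ∃ B : Set E, UBounded U B ∧
    ∀ f, MemHb U f → ∀ C : ℝ, (∀ x ∈ B, ‖f x‖ ≤ C) → ‖φ f‖ ≤ C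

/-- `U` is `H_b(U)`-convex. -/
def HbConvex (U : Set E) : Prop :=
  ∀ A : Set E, UBounded U A →
    UBounded U {x ∈ U | ∀ f, MemHb U f → ∀ C : ℝ, (∀ a ∈ A, ‖f a‖ ≤ C) → ‖f x‖ ≤ C}

/-- Continuous polynomials are dense in `H_b(U)`. -/
def PolysDense (U : Set E) : Prop :=
  ∀ f, MemHb U f → ∀ A : Set E, UBounded U A → ∀ ε > 0,
    ∃ P : E → ℂ, IsContPoly P ∧ ∀ x ∈ A, ‖f x - P x‖ ≤ ε


/-- The product of an `i`-homogeneous and a `j`-homogeneous polynomial is `(i + j)`-homogeneous: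
the multilinear map is `(u, w) ↦ M u * M' w` on `Fin i ⊕ Fin j ≃ Fin (i + j)`. -/
lemma IsHomogPoly.mul {i j : ℕ} {Q R : E → ℂ}
    (hQ : IsHomogPoly i Q) (hR : IsHomogPoly j R) :
    IsHomogPoly (i + j) (fun x => Q x * R x) := by
  obtain ⟨M, hM⟩ := hQ
  obtain ⟨M', hM'⟩ := hR
  refine ⟨((M.smulRight M').uncurrySum).domDomCongr finSumFinEquiv, fun x => ?_⟩
  simp [hM, hM', ContinuousMultilinearMap.uncurrySum_apply, Function.comp_def]

lemma IsHomogPoly.sum {ι : Type*} {n : ℕ}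
    (s : Finset ι) {Q : ι → E → ℂ} (hQ : ∀ i ∈ s, IsHomogPoly n (Q i)) :
    IsHomogPoly n (fun x => ∑ i ∈ s, Q i x) := by
  choose! M hM using hQ
  refine ⟨∑ i ∈ s, M i, fun x => ?_⟩
  rw [_root_.sum_apply]
  exact Finset.sum_congr rfl fun i hi => hM i hi x

lemma IsHomogPoly.map_smul {n : ℕ} {Q : E → ℂ}
    (hQ : IsHomogPoly n Q) (c : ℂ) (x : E) : Q (c • x) = c ^ n * Q x := by
  obtain ⟨M, hM⟩ := hQ
  rw [hM, hM]
  simpa using M.map_smul_univ (fun _ => c) (fun _ => x)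

/-- A family `v ↦ p v` of one-variable polynomials whose `k`-th coefficient is a continuous
`k`-homogeneous polynomial in `v`. It encodes the decomposition of `v ↦ (p v)(1)` into homogeneous
components. -/
def IsGradedFamily (p : E → Polynomial ℂ) : Prop :=
  ∀ k, IsHomogPoly k (fun v => (p v).coeff k)

lemma IsGradedFamily.mul {p q : E → Polynomial ℂ} (hp : IsGradedFamily p) (hq : IsGradedFamily q) :
    IsGradedFamily (fun v => p v * q v) := by
  intro k
  simp only [Polynomial.coeff_mul]
  refine IsHomogPoly.sum _ fun a ha => ?_
  rw [← Finset.HasAntidiagonal.mem_antidiagonal.1 ha]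
  exact (hp a.1).mul (hq a.2)

lemma IsGradedFamily.one :
    IsGradedFamily (fun _ : E => (1 : Polynomial ℂ)) := by
  intro k
  rcases k with _ | k
  · exact ⟨ContinuousMultilinearMap.constOfIsEmpty ℂ _ 1, fun x => by simp⟩
  · exact ⟨0, fun x => by simp [Polynomial.coeff_one]⟩

lemma IsGradedFamily.pow {p : E → Polynomial ℂ} (hp : IsGradedFamily p) (m : ℕ) :
    IsGradedFamily (fun v => p v ^ m) := by
  induction m with
  | zero => simpa using IsGradedFamily.one
  | succ m ih => simpa only [pow_succ] using ih.mul hp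

lemma IsGradedFamily.eval_one_smul {p : E → Polynomial ℂ} (hp : IsGradedFamily p)
    {N : ℕ} (hN : ∀ v, (p v).natDegree ≤ N) (c : ℂ) (v : E) : (p (c • v)).eval 1 = (p v).eval c := by
  rw [Polynomial.eval_eq_sum_range' (Nat.lt_succ_of_le (hN _)),
    Polynomial.eval_eq_sum_range' (Nat.lt_succ_of_le (hN _))]
  refine Finset.sum_congr rfl fun k _ => ?_
  rw [(hp k).map_smul c v]
  ring

/-- Cauchy's estimate for the coefficients of a polynomial on the unit circle, read off from
Parseval's identity. -/
lemma norm_coeff_le_of_circle (p : Polynomial ℂ) {C : ℝ}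
    (hC : ∀ c : ℂ, ‖c‖ = 1 → ‖p.eval c‖ ≤ C) (k : ℕ) : ‖p.coeff k‖ ≤ C := by
  have hC0 : 0 ≤ C := (norm_nonneg _).trans (hC 1 (by simp))
  have hsum : ∑ i ∈ p.support, ‖p.coeff i‖ ^ 2 ≤ C ^ 2 := by
    rw [Polynomial.sum_sq_norm_coeff_eq_circleAverage]
    refine Real.circleAverage_mono_on_of_le_circle ?_ fun c hc => ?_
    · exact (ContinuousOn.circleIntegrable' (by fun_prop))
    · exact pow_le_pow_left₀ (norm_nonneg _) (hC c (by simpa using hc)) 2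
  refine (sq_le_sq₀ (norm_nonneg _) hC0).1 (le_trans ?_ hsum)
  by_cases hk : k ∈ p.support
  · exact Finset.single_le_sum (f := fun i => ‖p.coeff i‖ ^ 2) (fun i _ => sq_nonneg _) hk
  · rw [Polynomial.notMem_support_iff.1 hk]
    simpa using Finset.sum_nonneg fun i _ => sq_nonneg ‖p.coeff i‖

/-- The hull inequality up to the factor `N + 1`, the number of homogeneous components. -/
lemma norm_eval_one_le {V : Set E} (hV : Balanced ℂ V) {x : E}
    (hx : ∀ (n : ℕ) (Q : E → ℂ), IsHomogPoly n Q →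
      ∀ C : ℝ, (∀ v ∈ V, ‖Q v‖ ≤ C) → ‖Q x‖ ≤ C)
    {p : E → Polynomial ℂ} (hp : IsGradedFamily p) {N : ℕ} (hN : ∀ v, (p v).natDegree ≤ N)
    {C : ℝ} (hC : ∀ v ∈ V, ‖(p v).eval 1‖ ≤ C) :
    ‖(p x).eval 1‖ ≤ (N + 1) * C := by
  have hcoeff (k : ℕ) : ‖(p x).coeff k‖ ≤ C := by
    refine hx k _ (hp k) C fun v hv => norm_coeff_le_of_circle _ (fun c hc => ?_) k
    rw [← hp.eval_one_smul hN]
    exact hC _ (hV.smul_mem hc.le hv)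
  rw [Polynomial.eval_eq_sum_range' (Nat.lt_succ_of_le (hN x))]
  calc ‖∑ k ∈ Finset.range (N + 1), (p x).coeff k * 1 ^ k‖
      ≤ ∑ k ∈ Finset.range (N + 1), C :=
        norm_sum_le_of_le _ fun k _ => by simpa using hcoeff k
    _ = (N + 1) * C := by simp

/-- Exponential growth beats linear growth: if `a > C`, dividing by `a ^ m` and letting `m → ∞` would
give `1 ≤ 0`. -/
lemma le_of_forall_pow_le {a C : ℝ} (ha : 0 ≤ a) (hC : 0 ≤ C) (N : ℕ)
    (h : ∀ m : ℕ, a ^ m ≤ (m * N + 1) * C ^ m) : a ≤ C := by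
  by_contra! hlt
  have ha0 : 0 < a := hC.trans_lt hlt
  have hr0 : 0 ≤ C / a := div_nonneg hC ha
  have hr1 : C / a < 1 := (div_lt_one ha0).2 hlt
  have hlim : Filter.Tendsto (fun m : ℕ => (m * (C / a) ^ m) * N + (C / a) ^ m)
      Filter.atTop (nhds (0 * N + 0)) :=
    ((tendsto_self_mul_const_pow_of_lt_one hr0 hr1).mul_const _).add
      (tendsto_pow_atTop_nhds_zero_of_lt_one hr0 hr1)
  refine absurd (ge_of_tendsto' hlim fun m => ?_) (show ¬ (1 : ℝ) ≤ 0 * N + 0 by norm_num)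
  calc (1 : ℝ) = a ^ m / a ^ m := (div_self (pow_pos ha0 m).ne').symm
    _ ≤ (m * N + 1) * C ^ m / a ^ m := by gcongr; exact h m
    _ = (m * (C / a) ^ m) * N + (C / a) ^ m := by rw [div_pow]; ring

/-- For a balanced set `V` in a complex Banach space, the polynomial hull of `V`
equals the intersection of its homogeneous polynomial hulls: if `|Q(x)| ≤ sup_V |Q|` for every
continuous homogeneous polynomial `Q`, then `|P(x)| ≤ sup_V |P|` for every continuous
polynomial `P`. -/
theorem stmt_0 {E : Type*} [NormedAddCommGroup E] [NormedSpace ℂ E] [CompleteSpace E]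
    (V : Set E) (hV : Balanced ℂ V) (x : E)
    (hx : ∀ (n : ℕ) (Q : E → ℂ), IsHomogPoly n Q →
      ∀ C : ℝ, (∀ v ∈ V, ‖Q v‖ ≤ C) → ‖Q x‖ ≤ C) :
    ∀ P : E → ℂ, IsContPoly P → ∀ C : ℝ, (∀ v ∈ V, ‖P v‖ ≤ C) → ‖P x‖ ≤ C := by
  rintro P ⟨N, Q, hQ, hP⟩ C hC
  -- For empty `V` the hypothesis on the polynomial `0` would hold with the bound `-1`.
  have hne : V.Nonempty := by
    by_contra hemp
    have h := hx 0 (fun _ => 0) ⟨0, fun _ => by simp⟩ (-1)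
      fun v hv => absurd ⟨v, hv⟩ hemp
    norm_num at h
  obtain ⟨v₀, hv₀⟩ := hne
  have hC0 : 0 ≤ C := (norm_nonneg _).trans (hC v₀ hv₀)
  let p : E → Polynomial ℂ := fun v =>
    ∑ k ∈ Finset.range (N + 1), Polynomial.monomial k (Q k v)
  have hcoeff (v : E) (k : ℕ) : (p v).coeff k = if k < N + 1 then Q k v else 0 := by
    simp [p, Polynomial.coeff_monomial]
  have hp : IsGradedFamily p := by
    intro k
    simp only [hcoeff]
    split_ifs
    · exact hQ k
    · exact ⟨0, fun _ => by simp⟩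
  have hdeg (v : E) : (p v).natDegree ≤ N :=
    Polynomial.natDegree_le_iff_coeff_eq_zero.2 fun k hk => by
      rw [hcoeff, if_neg (by omega)]
  have heval (v : E) : (p v).eval 1 = P v := by
    simp [p, hP, Polynomial.eval_finsetSum]
  refine le_of_forall_pow_le (norm_nonneg _) hC0 N fun m => ?_
  have h := norm_eval_one_le hV hx (hp.pow m) (N := m * N) (C := C ^ m)
    (fun v => Polynomial.natDegree_pow_le_of_le m (hdeg v))
    (fun v hv => by
      rw [Polynomial.eval_pow, heval, norm_pow]
      exact pow_le_pow_left₀ (norm_nonneg _) (hC v hv) m)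
  rw [Polynomial.eval_pow, heval, norm_pow] at h
  exact_mod_cast h
end

section
/- Let U be a nonempty balanced open subset of a complex Banach space E, let n ∈ ℕ and y ∈ (U_n)̂_P. Put T_y := ⋃_{z∈[0,y]} B(z, 2/(3n)) (union of open balls along the segment from 0 to y) and U_y := U ∪ T_y. Then U_y is a connected open subset of Û_P containing U ∪ {y}, and for every f ∈ H_b(U) the holomorphic extension f̃ of f to Û_P satisfies sup_{w∈T_y}|f̃(w)| ≤ sup_{x∈U_{4n}}|f(x)|; consequently f̃ restricted to U_y is of bounded type (bounded on every U_y-bounded set). -/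
/-!
The proof rests on two facts about the polynomial hull.

*Hulls move with translations and contractions.* Translates and dilates of continuous polynomials
are continuous polynomials (`IsContPoly.translate`, `IsContPoly.comp_smul`). Although `U_n` itself
need not be balanced, it is invariant under rotations, so by the maximum principle on complex lines
its hull is balanced (`polyHull_UNat_smul`). Hence the whole segment `[0, y]` lies in the hull of
`U_n`. As `x + v ∈ U_{4n}` whenever `x ∈ U_n` and `‖v‖ ≤ 3/(4n)`, every point within `3/(4n)` of the
segment lies in the hull of `U_{4n}` (`add_mem_polyHull`).

*The extension is dominated on hulls* (`norm_le_of_mem_polyHull`). Let `|f| ≤ C` on `U_m`, and let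
`w` be in the hull of `U_m`. The Taylor polynomials `p_k` of `f` at `0` satisfy `|p_k| ≤ C` on `U_m`
by Cauchy's estimates on the unit disc, so for `|ζ| < 1` the partial sums `∑_{k ≤ N} ζ^k p_k` are
bounded on `U_m` by `C` plus a geometric tail. That bound passes to `w`; there the partial sums
converge to `g (ζ w)`, because `ζ ↦ g (ζ w)` is holomorphic near the closed disc with the same
germ at `0` as `f`. Letting `N → ∞` and then `ζ → 1` gives `|g w| ≤ C`.

Since `3/(4n)` exceeds `2/(3n)`, `g` is bounded on a neighbourhood of `T` of positive width. A point
of a `U_y`-bounded set is either in that neighbourhood or uniformly far from the complement of `U`,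
and on points of the second kind `g = f` is bounded by hypothesis.
-/


open Set Metric

variable {E : Type*} [NormedAddCommGroup E] [NormedSpace ℂ E]

/-! ### Continuous polynomials -/

/-- A continuous polynomial is its own finite power series, which makes Mathlib's change of origin
available. -/
lemma isContPoly_hasFinite {P : E → ℂ} (hP : IsContPoly P) :
    ∃ (p : FormalMultilinearSeries ℂ E ℂ) (N : ℕ),
      HasFiniteFPowerSeriesOnBall P p 0 (N + 1) ⊤ := by
  obtain ⟨N, Q, hQ, hP⟩ := hP
  choose M hM using hQ
  refine ⟨fun k => if k ≤ N then M k else 0, N, .mk' ?_ (by simp) ?_⟩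
  · intro m hm
    exact if_neg (by omega)
  · intro x _
    rw [zero_add, hP]
    refine Finset.sum_congr rfl fun k hk => ?_
    rw [Finset.mem_range] at hk
    rw [if_pos (by omega), hM]

lemma isContPoly_partialSum (p : FormalMultilinearSeries ℂ E ℂ) (N : ℕ) :
    IsContPoly fun x => ∑ k ∈ Finset.range (N + 1), p k fun _ => x :=
  ⟨N, fun k x => p k fun _ => x, fun k => ⟨p k, fun _ => rfl⟩, fun _ => rfl⟩

lemma IsContPoly.translate {P : E → ℂ} (hP : IsContPoly P) (v : E) :
    IsContPoly fun x => P (x + v) := by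
  obtain ⟨p, N, h⟩ := isContPoly_hasFinite hP
  have h' := h.changeOrigin (y := v) (by simp)
  convert isContPoly_partialSum (p.changeOrigin v) N using 2 with x
  have := h'.eq_partialSum' (x + v) (by simp) (N + 1) le_rfl
  simpa [FormalMultilinearSeries.partialSum] using this

lemma IsContPoly.differentiable {P : E → ℂ} (hP : IsContPoly P) : Differentiable ℂ P := by
  obtain ⟨p, N, h⟩ := isContPoly_hasFinite hP
  exact fun x => (h.toHasFPowerSeriesOnBall.analyticAt_of_mem (by simp)).differentiableAt

lemma IsContPoly.comp_smul {P : E → ℂ} (hP : IsContPoly P) (c : ℂ) :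
    IsContPoly fun x => P (c • x) := by
  obtain ⟨N, Q, hQ, hP⟩ := hP
  refine ⟨N, fun k x => Q k (c • x), fun k => ?_, fun x => hP _⟩
  obtain ⟨M, hM⟩ := hQ k
  refine ⟨c ^ k • M, fun x => ?_⟩
  have := M.map_smul_univ (fun _ => c) (fun _ => x)
  simpa [hM] using this

lemma isContPoly_one : IsContPoly fun _ : E => (1 : ℂ) := by
  refine ⟨0, fun k _ => if k = 0 then 1 else 0, fun k => ?_, fun x => by simp⟩
  by_cases hk : k = 0
  · subst hk
    exact ⟨ContinuousMultilinearMap.constOfIsEmpty ℂ _ 1, fun x => by simp⟩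
  · exact ⟨0, fun x => by simp [hk]⟩

lemma isContPoly_clm (φ : E →L[ℂ] ℂ) : IsContPoly φ := by
  refine ⟨1, fun k x => if k = 1 then φ x else 0, fun k => ?_, fun x => by simp⟩
  by_cases hk : k = 1
  · subst hk
    exact ⟨ContinuousMultilinearMap.ofSubsingleton ℂ E ℂ (0 : Fin 1) φ, fun x => by simp⟩
  · exact ⟨0, fun x => by simp [hk]⟩

/-! ### Restriction to complex lines through the origin -/

/-- The maximum principle on the disc `{ζ • x : ‖ζ‖ ≤ 1}`. -/
lemma norm_smul_le_of_circle {h : E → ℂ} {x : E} {C : ℝ}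
    (hd : ∀ ζ : ℂ, ‖ζ‖ ≤ 1 → DifferentiableAt ℂ h (ζ • x))
    (hC : ∀ ζ : ℂ, ‖ζ‖ = 1 → ‖h (ζ • x)‖ ≤ C) {ζ : ℂ} (hζ : ‖ζ‖ ≤ 1) :
    ‖h (ζ • x)‖ ≤ C := by
  have hcl : closure (ball (0 : ℂ) 1) = closedBall 0 1 := closure_ball _ one_ne_zero
  refine Complex.norm_le_of_forall_mem_frontier_norm_le (f := fun ζ : ℂ => h (ζ • x))
    (U := ball 0 1) isBounded_ball ?_ ?_ (z := ζ) ?_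
  · refine DifferentiableOn.diffContOnCl fun z hz => ?_
    rw [hcl, mem_closedBall_zero_iff] at hz
    exact ((hd z hz).comp z (by fun_prop)).differentiableWithinAt
  · intro z hz
    rw [frontier_ball _ one_ne_zero, mem_sphere_zero_iff_norm] at hz
    exact hC z hz
  · rw [hcl, mem_closedBall_zero_iff]
    exact hζ

/-- The germ of `h` at `0` determines the power series of `ζ ↦ h (ζ • w)` on the whole unit disc,
however small the ball of convergence of `p` is. -/
lemma slice_powerSeries {h : E → ℂ} {p : FormalMultilinearSeries ℂ E ℂ}
    (hp : HasFPowerSeriesAt h p 0) {w : E}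
    (hd : ∀ ζ : ℂ, ‖ζ‖ ≤ 1 → DifferentiableAt ℂ h (ζ • w)) :
    HasFPowerSeriesOnBall (fun ζ : ℂ => h (ζ • w))
      (p.compContinuousLinearMap (ContinuousLinearMap.toSpanSingleton ℂ w)) 0 1 := by
  have h1 : HasFPowerSeriesAt (fun ζ : ℂ => h (ζ • w))
      (p.compContinuousLinearMap (ContinuousLinearMap.toSpanSingleton ℂ w)) 0 :=
    HasFPowerSeriesAt.compContinuousLinearMap (u := ContinuousLinearMap.toSpanSingleton ℂ w)
      (x := (0 : ℂ)) (by simpa using hp)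
  obtain ⟨r, hr⟩ := h1
  refine hr.exchange_radius (DifferentiableOn.hasFPowerSeriesOnBall (R := 1) (fun z hz => ?_)
    one_pos)
  simp only [NNReal.coe_one, mem_closedBall_zero_iff] at hz
  exact ((hd z hz).comp z (by fun_prop)).differentiableWithinAt

lemma slice_hasSum {h : E → ℂ} {p : FormalMultilinearSeries ℂ E ℂ}
    (hp : HasFPowerSeriesAt h p 0) {w : E}
    (hd : ∀ ζ : ℂ, ‖ζ‖ ≤ 1 → DifferentiableAt ℂ h (ζ • w)) {ζ : ℂ} (hζ : ‖ζ‖ < 1) :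
    HasSum (fun k => p k fun _ => ζ • w) (h (ζ • w)) := by
  have := (slice_powerSeries hp hd).hasSum (y := ζ)
    (by rw [mem_eball_zero_iff, ← ofReal_norm]; exact ENNReal.ofReal_lt_one.2 hζ)
  simpa only [zero_add, FormalMultilinearSeries.compContinuousLinearMap_apply, Function.comp_def,
    ContinuousLinearMap.toSpanSingleton_apply] using this

/-- Cauchy's estimate for the homogeneous Taylor terms of `h` at `0`. -/
lemma slice_coeff_le {h : E → ℂ} {p : FormalMultilinearSeries ℂ E ℂ}
    (hp : HasFPowerSeriesAt h p 0) {w : E} {C : ℝ}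
    (hd : ∀ ζ : ℂ, ‖ζ‖ ≤ 1 → DifferentiableAt ℂ h (ζ • w))
    (hC : ∀ ζ : ℂ, ‖ζ‖ = 1 → ‖h (ζ • w)‖ ≤ C) (k : ℕ) :
    ‖p k fun _ => w‖ ≤ C := by
  have h1 := (slice_powerSeries hp hd).factorial_smul 1 k
  rw [← iteratedDeriv_eq_iteratedFDeriv] at h1
  have h2 : ‖iteratedDeriv k (fun ζ : ℂ => h (ζ • w)) 0‖ ≤ k.factorial * C / 1 ^ k := by
    refine Complex.norm_iteratedDeriv_le_of_forall_mem_sphere_norm_le k one_pos ?_ ?_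
    · refine DifferentiableOn.diffContOnCl fun z hz => ?_
      rw [closure_ball _ one_ne_zero, mem_closedBall_zero_iff] at hz
      exact ((hd z hz).comp z (by fun_prop)).differentiableWithinAt
    · intro z hz
      exact hC z (by simpa using hz)
  simp only [FormalMultilinearSeries.compContinuousLinearMap_apply, Function.comp_def,
    ContinuousLinearMap.toSpanSingleton_apply, one_smul] at h1
  rw [← h1, nsmul_eq_mul, norm_mul, one_pow, div_one, Complex.norm_natCast] at h2
  have hk : (0 : ℝ) < k.factorial := by positivity
  exact le_of_mul_le_mul_left h2 hk

/-! ### The sets `U_m` and their polynomial hulls -/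

lemma UNat_rotate {U : Set E} (hbal : Balanced ℂ U) {m : ℕ} {x : E} (hx : x ∈ UNat U m)
    {ζ : ℂ} (hζ : ‖ζ‖ = 1) : ζ • x ∈ UNat U m := by
  obtain ⟨h1, h2, h3⟩ := hx
  have hζ0 : ζ ≠ 0 := by rintro rfl; simp at hζ
  refine ⟨hbal.smul_mem hζ.le h1, by rwa [norm_smul, hζ, one_mul], fun u hu => ?_⟩
  have hu' : ζ⁻¹ • u ∈ U := by
    refine h3 ?_
    have : ζ⁻¹ • u - x = ζ⁻¹ • (u - ζ • x) := by rw [smul_sub, inv_smul_smul₀ hζ0]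
    rw [mem_ball, dist_eq_norm] at hu ⊢
    rwa [this, norm_smul, norm_inv, hζ, inv_one, one_mul]
  simpa [smul_inv_smul₀ hζ0] using hbal.smul_mem hζ.le hu'

/-- The hull of `U_m` is balanced, although `U_m` is in general only invariant under rotations. -/
lemma polyHull_UNat_smul {U : Set E} (hbal : Balanced ℂ U) {m : ℕ} {y : E}
    (hy : y ∈ polyHull (UNat U m)) {c : ℂ} (hc : ‖c‖ ≤ 1) : c • y ∈ polyHull (UNat U m) := by
  intro P hP C hC
  refine hy _ (hP.comp_smul c) C fun x hx => ?_
  exact norm_smul_le_of_circle (fun ζ _ => hP.differentiable _)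
    (fun ζ hζ => hC _ (UNat_rotate hbal hx hζ)) hc

lemma polyHull_translate {A B : Set E} {v z : E} (h : ∀ x ∈ A, x + v ∈ B)
    (hz : z ∈ polyHull A) : z + v ∈ polyHull B :=
  fun _ hP C hC => hz _ (hP.translate v) C fun x hx => hC _ (h x hx)

lemma nonempty_of_mem_polyHull {A : Set E} {w : E} (hw : w ∈ polyHull A) : A.Nonempty := by
  by_contra h
  rw [not_nonempty_iff_eq_empty] at h
  have := hw _ isContPoly_one 0 (by simp [h])
  norm_num at this

lemma UNat_add_mem {F : Type*} [NormedAddCommGroup F] {U : Set F} {n : ℕ} (hn : 0 < n) {x v : F} (hx : x ∈ UNat U n)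
    (hv : ‖v‖ ≤ 3 / (4 * (n : ℝ))) : x + v ∈ UNat U (4 * n) := by
  obtain ⟨h1, h2, h3⟩ := hx
  have hn' : (1 : ℝ) ≤ n := by exact_mod_cast hn
  have e : 1 / (n : ℝ) = 1 / (4 * n) + 3 / (4 * n) := by field_simp; norm_num
  have e' : (0 : ℝ) < 1 / (4 * n) := by positivity
  have hsub : ball (x + v) (1 / (4 * (n : ℝ))) ⊆ ball x (1 / n) := by
    refine ball_subset_ball' ?_
    rw [dist_eq_norm, add_sub_cancel_left, e]
    linarith
  have hle : 3 / (4 * (n : ℝ)) ≤ 1 := by rw [div_le_one (by positivity)]; linarith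
  refine ⟨h3 (hsub (mem_ball_self e')), ?_, ?_⟩
  · push_cast
    linarith [norm_add_le x v]
  · push_cast
    exact hsub.trans h3

/-! ### Domination of the extension on hulls -/

open Filter Topology in
/-- An extension of `f` to `Û_P` is dominated on the hull of `U_m` by any bound of `f` on `U_m`:
the domination of the Taylor partial sums is passed to the limit along `ζ • w`, `‖ζ‖ < 1`, and then
`ζ → 1`. -/
lemma norm_le_of_mem_polyHull {U : Set E} (hU : IsOpen U) (h0 : (0 : E) ∈ U)
    (hbal : Balanced ℂ U) {f g : E → ℂ} (hf : AnalyticOnNhd ℂ f U)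
    (hg : AnalyticOnNhd ℂ g (UhatP U)) (hgf : EqOn g f U) {m : ℕ} {C : ℝ}
    (hC : ∀ x ∈ UNat U m, ‖f x‖ ≤ C) {w : E} (hw : w ∈ polyHull (UNat U m)) : ‖g w‖ ≤ C := by
  obtain ⟨p, hp⟩ := hf 0 h0
  have hpg : HasFPowerSeriesAt g p 0 := by
    refine HasFPowerSeriesAt.congr hp ?_
    filter_upwards [hU.mem_nhds h0] with x hx using (hgf hx).symm
  have hC0 : 0 ≤ C := by
    obtain ⟨x, hx⟩ := nonempty_of_mem_polyHull hw
    exact (norm_nonneg _).trans (hC x hx)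
  have hmem : ∀ ζ : ℂ, ‖ζ‖ ≤ 1 → ζ • w ∈ UhatP U := fun ζ hζ =>
    mem_iUnion.2 ⟨m, polyHull_UNat_smul hbal hw hζ⟩
  have hdg : ∀ ζ : ℂ, ‖ζ‖ ≤ 1 → DifferentiableAt ℂ g (ζ • w) := fun ζ hζ =>
    (hg _ (hmem ζ hζ)).differentiableAt
  have key : ∀ ζ : ℂ, ‖ζ‖ < 1 → ‖g (ζ • w)‖ ≤ C := by
    intro ζ hζ
    have hpart : ∀ N : ℕ, ‖∑ k ∈ Finset.range (N + 1), p k fun _ => ζ • w‖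
        ≤ C + C * ‖ζ‖ ^ (N + 1) / (1 - ‖ζ‖) := by
      intro N
      refine hw _ ((isContPoly_partialSum p N).comp_smul ζ) _ fun x hx => ?_
      have hdf : ∀ ξ : ℂ, ‖ξ‖ ≤ 1 → DifferentiableAt ℂ f (ξ • x) := fun ξ hξ =>
        (hf _ (hbal.smul_mem hξ hx.1)).differentiableAt
      have hcirc : ∀ ξ : ℂ, ‖ξ‖ = 1 → ‖f (ξ • x)‖ ≤ C := fun ξ hξ =>
        hC _ (UNat_rotate hbal hx hξ)
      have hterm : ∀ k, ‖p k fun _ => ζ • x‖ ≤ C * ‖ζ‖ ^ k := by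
        intro k
        rw [(p k).map_smul_univ (fun _ => ζ) (fun _ => x)]
        simp only [Finset.prod_const, Finset.card_univ, Fintype.card_fin, norm_smul, norm_pow]
        rw [mul_comm]
        exact mul_le_mul_of_nonneg_right (slice_coeff_le hp hdf hcirc k) (by positivity)
      -- At `x ∈ U_m` the partial sum differs from `f (ζ • x)` by a geometric tail.
      have htail := norm_sub_le_of_geometric_bound_of_hasSum hζ hterm
        (slice_hasSum hp hdf hζ) (N + 1)
      have hfx := norm_smul_le_of_circle hdf hcirc hζ.le
      calc _ ≤ _ := norm_le_norm_add_norm_sub' _ (f (ζ • x))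
        _ ≤ _ := add_le_add hfx htail
    have hlim := ((slice_hasSum hpg hdg hζ).tendsto_sum_nat.comp (tendsto_add_atTop_nat 1)).norm
    have hlim2 : Tendsto (fun N : ℕ => C + C * ‖ζ‖ ^ (N + 1) / (1 - ‖ζ‖)) atTop
        (𝓝 (C + C * 0 / (1 - ‖ζ‖))) :=
      ((((tendsto_pow_atTop_nhds_zero_of_lt_one (norm_nonneg ζ) hζ).comp
        (tendsto_add_atTop_nat 1)).const_mul C).div_const _).const_add C
    simpa using le_of_tendsto_of_tendsto' hlim hlim2 hpart
  have hcont : ContinuousAt (fun t : ℝ => ‖g ((t : ℂ) • w)‖) 1 := by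
    have h1 : ContinuousAt g (((1 : ℝ) : ℂ) • w) := (hdg _ (by simp)).continuousAt
    exact (ContinuousAt.comp (f := fun t : ℝ => (t : ℂ) • w) h1 (by fun_prop)).norm
  have hlim := hcont.tendsto.mono_left (nhdsWithin_le_nhds (s := Ioo 0 1))
  have : (𝓝[Ioo (0 : ℝ) 1] 1).NeBot := right_nhdsWithin_Ioo_neBot zero_lt_one
  have := le_of_tendsto hlim (b := C) (by
    filter_upwards [self_mem_nhdsWithin] with t ht
    refine key _ ?_
    rw [Complex.norm_real, Real.norm_of_nonneg ht.1.le]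
    exact ht.2)
  simpa using this

/-! ### Geometry of `Û_P` -/

lemma subset_polyHull (A : Set E) : A ⊆ polyHull A := fun _ hx _ _ _ hC => hC _ hx

lemma subset_UhatP {U : Set E} (hU : IsOpen U) : U ⊆ UhatP U := by
  intro x hx
  obtain ⟨ε, hε, hb⟩ := Metric.isOpen_iff.1 hU x hx
  obtain ⟨k, hk⟩ := exists_nat_ge (max ‖x‖ (1 / ε))
  refine mem_iUnion.2 ⟨k, subset_polyHull _ ⟨hx, (le_max_left _ _).trans hk, ?_⟩⟩
  refine (ball_subset_ball ?_).trans hb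
  exact (one_div_le (lt_of_lt_of_le (by positivity) ((le_max_right _ _).trans hk)) hε).2
    ((le_max_right _ _).trans hk)

lemma UBounded_UNat {F : Type*} [NormedAddCommGroup F] (U : Set F) {m : ℕ} (hm : 0 < m) : UBounded U (UNat U m) :=
  ⟨fun _ hx => hx.1, isBounded_iff_forall_norm_le.2 ⟨m, fun _ hx => hx.2.1⟩,
    1 / (m : ℝ), by positivity, fun _ hx => hx.2.2⟩

/-- Points within `3/(4n)` of the segment `[0, y]` lie in the hull of `U_{4n}`. The radius exceeds
the `2/(3n)` of the statement, which leaves room for the bounded-type assertion. -/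
lemma add_mem_polyHull {U : Set E} (hbal : Balanced ℂ U) {n : ℕ} (hn : 0 < n) {y z w : E}
    (hy : y ∈ polyHull (UNat U n)) (hz : z ∈ segment ℝ (0 : E) y)
    (hw : dist w z ≤ 3 / (4 * (n : ℝ))) : w ∈ polyHull (UNat U (4 * n)) := by
  rw [segment_eq_image] at hz
  obtain ⟨t, ht, rfl⟩ := hz
  simp only [smul_zero, zero_add] at hw
  have hz : ((t : ℂ) • y) ∈ polyHull (UNat U n) := by
    refine polyHull_UNat_smul hbal hy ?_
    rw [Complex.norm_real, Real.norm_of_nonneg ht.1]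
    exact ht.2
  rw [dist_eq_norm] at hw
  have := polyHull_translate (v := w - t • y) (fun x hx => UNat_add_mem hn hx hw) hz
  simpa using this

/-- The degenerate case `n = 0`: the norm bound forces `U_0 ⊆ {0}`, and continuous linear
functionals separate any other point from `0`. -/
lemma eq_zero_of_mem_polyHull_UNat_zero {U : Set E} {y : E} (hy : y ∈ polyHull (UNat U 0)) :
    y = 0 := by
  obtain ⟨φ, hφ, hφy⟩ := exists_dual_vector'' ℂ y
  have := hy φ (isContPoly_clm φ) 0 fun x hx => by
    have : x = 0 := by simpa using hx.2.1
    simp [this]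
  rw [hφy] at this
  simpa using this

/-- For `U` nonempty balanced open and `y ∈ (U_n)̂_P`, the set
`U_y = U ∪ ⋃_{z ∈ [0,y]} B(z, 2/(3n))` is a connected open subset of `Û_P` containing
`U ∪ {y}`, and the extension `f̃` of each `f ∈ H_b(U)` to `Û_P` satisfies
`sup_{T_y} |f̃| ≤ sup_{U_{4n}} |f|`; consequently `f̃|_{U_y}` is of bounded type. -/
theorem stmt_6 {E : Type*} [NormedAddCommGroup E] [NormedSpace ℂ E] [CompleteSpace E]
    (U : Set E) (hU : IsOpen U) (hne : U.Nonempty) (hbal : Balanced ℂ U)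
    (n : ℕ) (y : E) (hy : y ∈ polyHull (UNat U n))
    (T : Set E) (hT : T = ⋃ z ∈ segment ℝ (0 : E) y, ball z (2 / (3 * (n : ℝ))))
    (Uy : Set E) (hUy : Uy = U ∪ T) :
    IsOpen Uy ∧ IsConnected Uy ∧ Uy ⊆ UhatP U ∧ U ⊆ Uy ∧ y ∈ Uy ∧
    ∀ f : E → ℂ, MemHb U f →
      ∀ g : E → ℂ, AnalyticOnNhd ℂ g (UhatP U) → Set.EqOn g f U →
        (∀ C : ℝ, (∀ x ∈ UNat U (4 * n), ‖f x‖ ≤ C) → ∀ w ∈ T, ‖g w‖ ≤ C) ∧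
        ∀ A : Set E, UBounded Uy A → ∃ C : ℝ, ∀ w ∈ A, ‖g w‖ ≤ C := by
  have h0 : (0 : E) ∈ U := by
    obtain ⟨x, hx⟩ := hne
    simpa using hbal.smul_mem (a := (0 : ℂ)) (by simp) hx
  have hstarU : StarConvex ℝ 0 U := by
    refine starConvex_zero_iff.2 fun x hx a ha0 ha1 => ?_
    have := hbal.smul_mem (a := (a : ℂ)) (by rwa [Complex.norm_real, Real.norm_of_nonneg ha0]) hx
    simpa using this
  have hUU : U ⊆ Uy := hUy ▸ subset_union_left
  rcases Nat.eq_zero_or_pos n with rfl | hn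
  · -- The radius is the junk value `2 / 0 = 0`, so `T` is empty and `y = 0`.
    have hTe : T = ∅ := by simp [hT]
    obtain rfl : U = Uy := by rw [hUy, hTe, union_empty]
    obtain rfl := eq_zero_of_mem_polyHull_UNat_zero hy
    refine ⟨hU, (hstarU.isPathConnected h0).isConnected, subset_UhatP hU, hUU, h0,
      fun f hf g hg hgf => ⟨by simp [hTe], fun A hA => ?_⟩⟩
    obtain ⟨C, hC⟩ := hf.2 A hA
    exact ⟨C, fun w hw => (hgf (hA.1 hw)).symm ▸ hC w hw⟩
  have hn' : (0 : ℝ) < n := by exact_mod_cast hn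
  have hr : 0 < 2 / (3 * (n : ℝ)) := by positivity
  have hThick : T = thickening (2 / (3 * (n : ℝ))) (segment ℝ (0 : E) y) := by
    rw [hT, thickening_eq_biUnion_ball]
  have hTconv : Convex ℝ T := hThick ▸ (convex_segment _ _).thickening _
  have hsegT : segment ℝ (0 : E) y ⊆ T := hThick ▸ self_subset_thickening hr _
  have hTmem : ∀ w ∈ T, ∃ z ∈ segment ℝ (0 : E) y, dist w z < 2 / (3 * (n : ℝ)) := by
    intro w hw
    simpa [hT] using hw
  -- `2/(3n)` plus the margin `1/(12n)` is exactly the radius of `add_mem_polyHull`.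
  have hrr : 2 / (3 * (n : ℝ)) + 1 / (12 * n) = 3 / (4 * n) := by field_simp; norm_num
  have hr12 : 0 < 1 / (12 * (n : ℝ)) := by positivity
  have hThull : ∀ w ∈ T, w ∈ polyHull (UNat U (4 * n)) := by
    intro w hw
    obtain ⟨z, hz, hwz⟩ := hTmem w hw
    exact add_mem_polyHull hbal hn hy hz (by linarith)
  refine ⟨?_, ?_, ?_, hUU, hUy ▸ Or.inr (hsegT (right_mem_segment _ _ _)), ?_⟩
  · rw [hUy, hThick]
    exact hU.union isOpen_thickening
  · refine (StarConvex.isPathConnected (a := (0 : E)) ?_ (hUU h0)).isConnected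
    rw [hUy]
    exact hstarU.union (hTconv.starConvex (hsegT (left_mem_segment _ _ _)))
  · rw [hUy]
    exact union_subset (subset_UhatP hU) fun w hw => mem_iUnion.2 ⟨4 * n, hThull w hw⟩
  intro f hf g hg hgf
  refine ⟨fun C hC w hw => norm_le_of_mem_polyHull hU h0 hbal hf.1 hg hgf hC (hThull w hw),
    fun A hA => ?_⟩
  obtain ⟨hAU, hAb, d, hd, hAd⟩ := hA
  obtain ⟨C₁, hC₁⟩ := hf.2 _ (UBounded_UNat U (m := 4 * n) (by omega))
  -- `δ` is small enough that a `δ`-neighbourhood of `T` stays within `3 / (4n)` of the segment.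
  set δ := min d (1 / (12 * (n : ℝ))) with hδ
  have hδ0 : 0 < δ := lt_min hd hr12
  obtain ⟨C₂, hC₂⟩ := hf.2 {a ∈ A | ball a δ ⊆ U}
    ⟨fun a ha => ha.2 (mem_ball_self hδ0), hAb.subset fun _ ha => ha.1, δ, hδ0, fun _ ha => ha.2⟩
  refine ⟨max C₁ C₂, fun a ha => ?_⟩
  by_cases hb : ball a δ ⊆ U
  · rw [hgf (hb (mem_ball_self hδ0))]
    exact (hC₂ a ⟨ha, hb⟩).trans (le_max_right _ _)
  · -- The ball lies in `U ∪ T`, so a point of it outside `U` is a point of `T` close to `a`.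
    obtain ⟨u, hu, huU⟩ := not_subset.1 hb
    have huT : u ∈ T := by
      have : u ∈ U ∪ T := hUy ▸ hAd a ha (ball_subset_ball (min_le_left _ _) hu)
      exact this.resolve_left huU
    obtain ⟨z, hz, huz⟩ := hTmem u huT
    have hau : dist a u < 1 / (12 * (n : ℝ)) :=
      (dist_comm a u ▸ mem_ball.1 hu).trans_le (min_le_right _ _)
    refine (norm_le_of_mem_polyHull hU h0 hbal hf.1 hg hgf hC₁
      (add_mem_polyHull hbal hn hy hz ?_)).trans (le_max_left _ _)
    linarith [dist_triangle a u z]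
end

section
/- There exist a nonempty balanced open subset U of the complex Banach space c₀ and a function g ∈ H_b(U) such that the (unique) holomorphic extension g̃ of g to Û_P is NOT of bounded type: g̃ is unbounded on some Û_P-bounded set. Moreover, for this U the sets (U_n)̂_P do not form a fundamental system of Û_P-bounded sets: there is a Û_P-bounded set D not contained in (U_n)̂_P for any n. -/
/-!
Write `x = (x₀, x₁, …)` and group the coordinates of `c₀` in pairs `(x_{2k}, x_{2k+1})`. Let `U` be
the union of the open unit ball and of the pieces
`{x : |x_{2k}|, |x_{2k+1}| < 2, ||x_{2k}| - |x_{2k+1}|| < 1/(k+1), sup of the other |x_j| < 1}`.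

* The `k`-th piece contains a thin shell around every torus `|x_{2k}| = |x_{2k+1}| = r < 2`, so by
  the maximum principle in each of the two variables (`mem_UhatP`) the hull `Û_P` contains the whole
  ball of radius `1/2` about `(3/2) e_{2k}`. Hence `D = {(3/2) e_{2k} : k}` is
  `Û_P`-bounded.
* The shells get thinner as `k → ∞`: if `ball x d ⊆ U` and `d > 2/(k+1)`, then moving `x_{2k}`
  radially by `2/(k+1)` leaves the shell, which forces `|x_{2k}| ≤ 1` (`coord_le_one`). So for large
  `k` the polynomial `x_{2k}` separates `(3/2) e_{2k}` from a given `U_n`.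
* The entire function `g(x) = ∑ₖ ((4/5) x_{2k})^k` is bounded on `U`-bounded sets, because all but
  finitely many of its terms are dominated there by `(4/5)^k`; but `g ((3/2) e_{2k})` has the term
  `(6/5)^k`, so `g` is unbounded on `D`. Any analytic extension of `g|_U` to `Û_P` agrees with `g`
  on `D` by the identity theorem along the segment from `0` to `(3/2) e_{2k}`, which lies in `Û_P`.
-/

open Set Metric

variable {E : Type*} [NormedAddCommGroup E] [NormedSpace ℂ E]

open Filter Topology

/-- The Banach space `c₀`. -/
abbrev Czero := ZeroAtInftyContinuousMap ℕ ℂ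

namespace Czero

/-! ### Coordinates and unit vectors of `c₀` -/

lemma norm_apply_le (x : Czero) (i : ℕ) : ‖x i‖ ≤ ‖x‖ := by
  rw [← ZeroAtInftyContinuousMap.norm_toBCF_eq_norm]
  exact x.toBCF.norm_coe_le_norm i

lemma norm_le_of {x : Czero} {C : ℝ} (hC : 0 ≤ C) (h : ∀ i, ‖x i‖ ≤ C) : ‖x‖ ≤ C := by
  rw [← ZeroAtInftyContinuousMap.norm_toBCF_eq_norm]
  exact (BoundedContinuousFunction.norm_le hC).2 h

lemma tendsto_zero (x : Czero) : Tendsto (fun i => x i) atTop (𝓝 0) := by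
  have := x.zero_at_infty'
  rwa [cocompact_eq_atTop] at this

/-- The `i`-th coordinate functional on `c₀`. -/
noncomputable def ev (i : ℕ) : Czero →L[ℂ] ℂ :=
  LinearMap.mkContinuous
    { toFun := fun x => x i
      map_add' := fun _ _ => rfl
      map_smul' := fun _ _ => rfl } 1 (fun x => by simpa using norm_apply_le x i)

@[simp] lemma ev_apply (i : ℕ) (x : Czero) : ev i x = x i := rfl

lemma norm_ev_le (i : ℕ) : ‖ev i‖ ≤ 1 := LinearMap.mkContinuous_norm_le _ zero_le_one _

/-- The `i`-th unit vector of `c₀`. -/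
noncomputable def e (i : ℕ) : Czero where
  toFun j := if j = i then 1 else 0
  continuous_toFun := continuous_of_discreteTopology
  zero_at_infty' := by
    rw [cocompact_eq_atTop]
    refine tendsto_const_nhds.congr' ?_
    filter_upwards [eventually_gt_atTop i] with j hj
    simp [hj.ne']

lemma e_apply (i j : ℕ) : e i j = if j = i then 1 else 0 := rfl

/-- The points `(3/2) e_{2k}`, which form the `Û_P`-bounded set `D`. -/
noncomputable def pt (k : ℕ) : Czero := (3 / 2 : ℂ) • e (2 * k)

lemma pt_apply (k j : ℕ) : pt k j = if j = 2 * k then 3 / 2 else 0 := by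
  simp [pt, e_apply]

/-! ### The balanced open set -/

/-- The `k`-th piece of `U`. The parameter `δ` says that the coordinates other than `2k` and
`2k + 1` have supremum strictly less than `1`. -/
def piece (k : ℕ) : Set Czero :=
  {x | ‖x (2 * k)‖ < 2 ∧ ‖x (2 * k + 1)‖ < 2 ∧
    |‖x (2 * k)‖ - ‖x (2 * k + 1)‖| < 1 / ((k : ℝ) + 1) ∧
    ∃ δ > 0, ∀ j, j ≠ 2 * k → j ≠ 2 * k + 1 → ‖x j‖ ≤ 1 - δ}

/-- The balanced open set `U` of the construction. -/
def dom : Set Czero := ball 0 1 ∪ ⋃ k, piece k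

lemma norm_sub_lt {x y : Czero} {r : ℝ} (h : y ∈ ball x r) (i : ℕ) : ‖y i - x i‖ < r := by
  have h1 := norm_apply_le (y - x) i
  rw [mem_ball, dist_eq_norm] at h
  exact lt_of_le_of_lt h1 h

lemma isOpen_piece (k : ℕ) : IsOpen (piece k) := by
  have hc : ∀ i, Continuous fun x : Czero => ‖x i‖ := fun i => (ev i).continuous.norm
  have h1 : IsOpen {x : Czero | ‖x (2 * k)‖ < 2} := isOpen_lt (hc _) continuous_const
  have h2 : IsOpen {x : Czero | ‖x (2 * k + 1)‖ < 2} := isOpen_lt (hc _) continuous_const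
  have h3 : IsOpen {x : Czero | |‖x (2 * k)‖ - ‖x (2 * k + 1)‖| < 1 / ((k : ℝ) + 1)} :=
    isOpen_lt ((hc _).sub (hc _)).abs continuous_const
  have h4 : IsOpen {x : Czero | ∃ δ > 0, ∀ j, j ≠ 2 * k → j ≠ 2 * k + 1 → ‖x j‖ ≤ 1 - δ} := by
    rw [Metric.isOpen_iff]
    rintro x ⟨δ, hδ, hx⟩
    refine ⟨δ / 2, by positivity, fun y hy => ⟨δ / 2, by positivity, fun j hj hj' => ?_⟩⟩
    have := norm_sub_lt hy j
    have h5 := norm_sub_norm_le (y j) (x j)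
    linarith [hx j hj hj']
  exact h1.inter (h2.inter (h3.inter h4))

lemma isOpen_dom : IsOpen dom := isOpen_ball.union (isOpen_iUnion isOpen_piece)

lemma balanced_dom : Balanced ℂ dom := by
  rw [balanced_iff_smul_mem]
  intro a ha x hx
  have hle : ∀ j, ‖(a • x) j‖ ≤ ‖x j‖ := fun j => by
    rw [ZeroAtInftyContinuousMap.smul_apply, norm_smul]
    exact mul_le_of_le_one_left (norm_nonneg _) ha
  rcases hx with hx | hx
  · left
    rw [mem_ball_zero_iff] at hx ⊢
    rw [norm_smul]
    exact lt_of_le_of_lt (mul_le_of_le_one_left (norm_nonneg _) ha) hx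
  · right
    obtain ⟨k, h1, h2, h3, δ, hδ, h4⟩ := mem_iUnion.1 hx
    refine mem_iUnion.2 ⟨k, (hle _).trans_lt h1, (hle _).trans_lt h2, ?_, δ, hδ,
      fun j hj hj' => (hle j).trans (h4 j hj hj')⟩
    simp only [ZeroAtInftyContinuousMap.smul_apply, norm_smul]
    rw [← mul_sub, abs_mul, abs_of_nonneg (norm_nonneg a)]
    exact lt_of_le_of_lt (mul_le_of_le_one_left (abs_nonneg _) ha) h3

/-- A point of `U` with `|x_{2k}| > 1` lies in the `k`-th piece: the unit ball and all the other
pieces require `|x_{2k}| < 1`. -/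
lemma shell_of_mem_dom {x : Czero} {k : ℕ} (hx : x ∈ dom) (hk : 1 < ‖x (2 * k)‖) :
    |‖x (2 * k)‖ - ‖x (2 * k + 1)‖| < 1 / ((k : ℝ) + 1) := by
  rcases hx with hx | hx
  · have := norm_apply_le x (2 * k)
    rw [mem_ball_zero_iff] at hx
    linarith
  · obtain ⟨m, h1, h2, h3, δ, hδ, h4⟩ := mem_iUnion.1 hx
    by_cases hkm : k = m
    · subst hkm; exact h3
    · have := h4 (2 * k) (by omega) (by omega)
      linarith

/-- Points at distance at least `d > 2/(k+1)` from the complement of `U` satisfy `|x_{2k}| ≤ 1`: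
otherwise a radial shift of `x_{2k}` by twice the thickness of the shell leaves `U`. -/
lemma coord_le_one {x : Czero} {d : ℝ} {k : ℕ} (hd : 2 / ((k : ℝ) + 1) < d)
    (hb : ball x d ⊆ dom) : ‖x (2 * k)‖ ≤ 1 := by
  by_contra! hx
  set ε : ℝ := 1 / ((k : ℝ) + 1) with hε
  have hε0 : 0 < ε := by positivity
  have hd' : 2 * ε < d := by rw [hε]; convert hd using 1; ring
  have hxU : x ∈ dom := hb (mem_ball_self (by linarith))
  have h1 := shell_of_mem_dom hxU hx
  have hx0 : (0 : ℝ) < ‖x (2 * k)‖ := by linarith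
  let c : ℂ := ((2 * ε / ‖x (2 * k)‖ : ℝ) : ℂ) * x (2 * k)
  have hc : ‖c‖ = 2 * ε := by
    simp only [c, norm_mul, Complex.norm_real, Real.norm_eq_abs]
    rw [abs_of_pos (by positivity)]
    field_simp
  let y : Czero := x + c • e (2 * k)
  have hy0 : y (2 * k) = ((1 + 2 * ε / ‖x (2 * k)‖ : ℝ) : ℂ) * x (2 * k) := by
    simp [y, e_apply, c]; ring
  have hy1 : y (2 * k + 1) = x (2 * k + 1) := by
    simp [y, e_apply]
  have hyn : ‖y (2 * k)‖ = ‖x (2 * k)‖ + 2 * ε := by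
    rw [hy0, norm_mul, Complex.norm_real, Real.norm_eq_abs, abs_of_pos (by positivity)]
    field_simp
  have hyU : y ∈ dom := by
    apply hb
    rw [mem_ball, dist_eq_norm]
    refine lt_of_le_of_lt (norm_le_of (C := 2 * ε) (by positivity) fun i => ?_) hd'
    simp only [y, add_sub_cancel_left, ZeroAtInftyContinuousMap.smul_apply, e_apply]
    split_ifs
    · simp [hc]
    · simp; positivity
  have h2 := shell_of_mem_dom hyU (k := k) (by rw [hyn]; linarith)
  rw [hyn, hy1] at h2
  have h3 := (abs_lt.1 h1).1
  have h4 := (abs_lt.1 h2).2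
  linarith

/-! ### The polynomial hull -/

lemma IsContPoly.differentiable {P : Czero → ℂ} (hP : IsContPoly P) : Differentiable ℂ P := by
  obtain ⟨N, Q, hQ, hPQ⟩ := hP
  rw [funext hPQ]
  refine Differentiable.fun_sum fun k _ => ?_
  obtain ⟨M, hM⟩ := hQ k
  rw [funext hM]
  have h1 : ContDiff ℂ 1 fun x : Czero => M fun _ => x :=
    M.contDiff.comp (contDiff_pi.2 fun _ => contDiff_id)
  exact h1.differentiable one_ne_zero

/-- One-variable maximum principle along a complex line. -/
lemma line_max {P : Czero → ℂ} (hP : Differentiable ℂ P) (a b : Czero) {r C : ℝ} (hr : 0 < r)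
    (h : ∀ s : ℂ, ‖s‖ = r → ‖P (a + s • b)‖ ≤ C) {s : ℂ} (hs : ‖s‖ ≤ r) :
    ‖P (a + s • b)‖ ≤ C := by
  have hd : Differentiable ℂ fun s : ℂ => P (a + s • b) :=
    hP.comp ((differentiable_const a).add (differentiable_id.smul_const b))
  refine Complex.norm_le_of_forall_mem_frontier_norm_le (f := fun s : ℂ => P (a + s • b))
    (U := ball (0 : ℂ) r) isBounded_ball hd.diffContOnCl (fun z hz => h z ?_) ?_
  · rw [frontier_ball _ hr.ne'] at hz
    simpa using hz
  · rw [closure_ball _ hr.ne']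
    simpa using hs

/-- The hull `Û_P` contains the points whose coordinates `2k`, `2k + 1` lie in the bidisc spanned by
the tori of the `k`-th piece, with the coordinates other than `2k` kept at most `1/2`. -/
lemma mem_UhatP {k : ℕ} {z : Czero} (hz0 : ‖z (2 * k)‖ < 2)
    (hzj : ∀ j, j ≠ 2 * k → ‖z j‖ ≤ 1 / 2) : z ∈ UhatP dom := by
  -- The torus radius `r` dominates both distinguished coordinates of `z`.
  obtain ⟨r, hr1, hr2⟩ : ∃ r, max ‖z (2 * k)‖ 1 < r ∧ r < 2 :=
    exists_between (max_lt hz0 (by norm_num))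
  obtain ⟨hzr, hr1⟩ := max_lt_iff.1 hr1
  obtain ⟨n, hn⟩ : ∃ n : ℕ, max (max 4 (1 / (2 - r))) (2 * ((k : ℝ) + 1)) < n :=
    exists_nat_gt _
  obtain ⟨hn, hn3⟩ := max_lt_iff.1 hn
  obtain ⟨hn1, hn2⟩ := max_lt_iff.1 hn
  have hn0 : (0 : ℝ) < n := by linarith
  have i1 : 1 / (n : ℝ) ≤ 1 / 4 := one_div_le_one_div_of_le (by norm_num) hn1.le
  have i2 : 1 / (n : ℝ) < 2 - r := by
    rw [one_div_lt hn0 (by linarith)]; exact hn2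
  have i3 : 2 * (1 / (n : ℝ)) < 1 / ((k : ℝ) + 1) := by
    rw [mul_one_div, div_lt_div_iff₀ hn0 (by positivity)]; linarith
  refine mem_iUnion.2 ⟨n, fun P hP C hC => ?_⟩
  -- `w s t` is `z` with its two distinguished coordinates replaced by `s` and `t`.
  let b : Czero := z - z (2 * k) • e (2 * k) - z (2 * k + 1) • e (2 * k + 1)
  let w : ℂ → ℂ → Czero := fun s t => b + s • e (2 * k) + t • e (2 * k + 1)
  have w0 : ∀ s t, w s t (2 * k) = s := fun s t => by simp [w, b, e_apply]
  have w1 : ∀ s t, w s t (2 * k + 1) = t := fun s t => by simp [w, b, e_apply]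
  have wj : ∀ s t j, j ≠ 2 * k → j ≠ 2 * k + 1 → w s t j = z j := fun s t j h h' => by
    simp [w, b, e_apply, h, h']
  have torus : ∀ s t : ℂ, ‖s‖ = r → ‖t‖ = r → ‖P (w s t)‖ ≤ C := by
    intro s t hs ht
    apply hC
    have hball : ball (w s t) (1 / (n : ℝ)) ⊆ dom := by
      intro y hy
      have a0 := norm_sub_lt hy (2 * k)
      have a1 := norm_sub_lt hy (2 * k + 1)
      rw [w0] at a0
      rw [w1] at a1
      have b0 := abs_lt.1 ((abs_norm_sub_norm_le (y (2 * k)) s).trans_lt a0)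
      have b1 := abs_lt.1 ((abs_norm_sub_norm_le (y (2 * k + 1)) t).trans_lt a1)
      rw [hs] at b0
      rw [ht] at b1
      right
      refine mem_iUnion.2 ⟨k, by linarith, by linarith, ?_, 1 / 4, by norm_num,
        fun j hj hj' => ?_⟩
      · rw [abs_lt]; constructor <;> linarith
      · have a2 := norm_sub_lt hy j
        rw [wj s t j hj hj'] at a2
        linarith [norm_sub_norm_le (y j) (z j), hzj j hj]
    refine ⟨hball (mem_ball_self (by positivity)), ?_, hball⟩
    refine norm_le_of hn0.le fun j => ?_
    by_cases h : j = 2 * k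
    · rw [h, w0]; linarith
    by_cases h' : j = 2 * k + 1
    · rw [h', w1]; linarith
    rw [wj s t j h h']
    linarith [hzj j h]
  have hPd := IsContPoly.differentiable hP
  have hr0 : 0 < r := by linarith
  have step1 : ∀ s : ℂ, ‖s‖ = r → ‖P (w s (z (2 * k + 1)))‖ ≤ C := fun s hs =>
    line_max hPd _ _ hr0 (fun t ht => torus s t hs ht)
      (by linarith [hzj (2 * k + 1) (by omega)])
  have comm : ∀ s t, w s t = (b + t • e (2 * k + 1)) + s • e (2 * k) := fun s t => by
    simp only [w]; abel
  have step2 : ‖P (w (z (2 * k)) (z (2 * k + 1)))‖ ≤ C := by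
    rw [comm]
    exact line_max hPd _ _ hr0 (fun s hs => by rw [← comm]; exact step1 s hs) hzr.le
  have hw : w (z (2 * k)) (z (2 * k + 1)) = z := by simp only [w, b]; abel
  rwa [hw] at step2

lemma ball_subset_UhatP (k : ℕ) : ball (pt k) (1 / 2) ⊆ UhatP dom := by
  intro z hz
  refine mem_UhatP (k := k) ?_ fun j hj => ?_
  · have h1 := norm_sub_lt hz (2 * k)
    have h2 := norm_sub_norm_le (z (2 * k)) (pt k (2 * k))
    rw [pt_apply, if_pos rfl] at h1 h2
    have : ‖(3 / 2 : ℂ)‖ = 3 / 2 := by norm_num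
    linarith
  · have h1 := norm_sub_lt hz j
    rw [pt_apply, if_neg hj, sub_zero] at h1
    exact h1.le

/-- The segment from `0` to `(3/2) e_{2k}`. -/
def seg (k : ℕ) : Set Czero := (fun t : ℝ => (t : ℂ) • e (2 * k)) '' Icc 0 (3 / 2)

lemma isPreconnected_seg (k : ℕ) : IsPreconnected (seg k) :=
  isPreconnected_Icc.image _ (by fun_prop)

lemma zero_mem_seg (k : ℕ) : 0 ∈ seg k := ⟨0, by norm_num, by simp⟩

lemma pt_mem_seg (k : ℕ) : pt k ∈ seg k := ⟨3 / 2, by norm_num, by simp [pt]⟩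

lemma seg_subset_UhatP (k : ℕ) : seg k ⊆ UhatP dom := by
  rintro _ ⟨t, ⟨ht0, ht⟩, rfl⟩
  refine mem_UhatP (k := k) ?_ fun j hj => ?_
  · simp [e_apply, abs_of_nonneg ht0]; linarith
  · simp [e_apply, hj]

/-! ### The entire function `g` -/

/-- The function `g(x) = ∑ₖ ((4/5) x_{2k})^k`. -/
noncomputable def g (x : Czero) : ℂ := ∑' k : ℕ, ((4 / 5 : ℂ) * x (2 * k)) ^ k

lemma norm_coef : ‖(4 / 5 : ℂ)‖ = 4 / 5 := by norm_num

lemma norm_term (x : Czero) (k : ℕ) :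
    ‖((4 / 5 : ℂ) * x (2 * k)) ^ k‖ = (4 / 5) ^ k * ‖x (2 * k)‖ ^ k := by
  rw [norm_pow, norm_mul, norm_coef, mul_pow]

lemma summable_geom : Summable fun k : ℕ => (4 / 5 : ℝ) ^ k :=
  summable_geometric_of_lt_one (by norm_num) (by norm_num)

lemma summable_g (x : Czero) : Summable fun k : ℕ => ((4 / 5 : ℂ) * x (2 * k)) ^ k := by
  refine Summable.of_norm_bounded_eventually_nat summable_geom ?_
  have h1 : ∀ᶠ i in atTop, ‖x i‖ < 1 := by
    have := (tendsto_zero x).norm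
    rw [norm_zero] at this
    exact this.eventually_lt_const one_pos
  obtain ⟨N, hN⟩ := eventually_atTop.1 h1
  filter_upwards [eventually_ge_atTop N] with k hk
  rw [norm_term]
  exact mul_le_of_le_one_right (by positivity)
    (pow_le_one₀ (norm_nonneg _) (hN _ (by omega)).le)

/-- The Taylor series of `g` at the origin. -/
noncomputable def gSeries : FormalMultilinearSeries ℂ Czero ℂ := fun k =>
  (ContinuousMultilinearMap.mkPiAlgebraFin ℂ k ℂ).compContinuousLinearMap
    fun _ => (4 / 5 : ℂ) • ev (2 * k)

lemma gSeries_apply (k : ℕ) (x : Czero) :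
    gSeries k (fun _ => x) = ((4 / 5 : ℂ) * x (2 * k)) ^ k := by
  simp [gSeries]

lemma norm_gSeries_le (k : ℕ) : ‖gSeries k‖ ≤ 1 := by
  refine (ContinuousMultilinearMap.norm_compContinuousLinearMap_le _ _).trans ?_
  rw [ContinuousMultilinearMap.norm_mkPiAlgebraFin, one_mul]
  refine Finset.prod_le_one (fun _ _ => norm_nonneg _) fun _ _ => ?_
  rw [norm_smul, norm_coef]
  linarith [norm_ev_le (2 * k)]

lemma hasFPowerSeries_g : HasFPowerSeriesOnBall g gSeries 0 1 where
  r_le := by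
    have := gSeries.le_radius_of_bound 1 (r := 1) fun n => by
      simpa using norm_gSeries_le n
    simpa using this
  r_pos := one_pos
  hasSum := fun {y} _ => by
    simp only [gSeries_apply, zero_add]
    exact (summable_g y).hasSum

/-- The projection of `c₀` that kills the first `N` coordinates. -/
noncomputable def tail (N : ℕ) : Czero →L[ℂ] Czero :=
  ContinuousLinearMap.id ℂ Czero - ∑ i ∈ Finset.range N, (ev i).smulRight (e i)

lemma tail_apply (N : ℕ) (x : Czero) (j : ℕ) : tail N x j = if j < N then 0 else x j := by
  have h : tail N x j = ev j (tail N x) := rfl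
  rw [h]
  simp only [tail, sub_apply, sum_apply, map_sub, map_sum,
    ContinuousLinearMap.id_apply, ContinuousLinearMap.smulRight_apply, map_smul, ev_apply, e_apply,
    smul_eq_mul, mul_ite, mul_one, mul_zero, Finset.sum_ite_eq, Finset.mem_range]
  split_ifs <;> simp

/-- `g` is entire: near any point it differs from `g ∘ tail N` by finitely many terms, and for `N`
large the tail of the point lies in the unit ball, where the Taylor series at `0` converges. -/
lemma analyticAt_g (x : Czero) : AnalyticAt ℂ g x := by
  have h1 : ∀ᶠ i in atTop, ‖x i‖ < 1 / 2 := by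
    have := (tendsto_zero x).norm
    rw [norm_zero] at this
    exact this.eventually_lt_const (by norm_num)
  obtain ⟨N, hN⟩ := eventually_atTop.1 h1
  have hsplit : g = fun y => g (tail N y) + ∑ k ∈ Finset.range N,
      (((4 / 5 : ℂ) * ev (2 * k) y) ^ k - ((4 / 5 : ℂ) * ev (2 * k) (tail N y)) ^ k) := by
    funext y
    rw [← sub_eq_iff_eq_add']
    simp only [g, ev_apply]
    rw [← (summable_g y).tsum_sub (summable_g _)]
    refine tsum_eq_sum fun k hk => ?_
    rw [Finset.mem_range, not_lt] at hk
    rw [tail_apply, if_neg (by omega), sub_self]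
  have hnorm : ‖tail N x‖ ≤ 1 / 2 := norm_le_of (by norm_num) fun i => by
    rw [tail_apply]
    split_ifs with h
    · simp
    · exact (hN i (by omega)).le
  have ht : AnalyticAt ℂ g (tail N x) := by
    refine hasFPowerSeries_g.analyticAt_of_mem ?_
    have : tail N x ∈ ball (0 : Czero) 1 := by
      rw [mem_ball_zero_iff]; linarith
    rw [← Metric.eball_ofReal] at this
    simpa using this
  rw [hsplit]
  refine AnalyticAt.add (ht.comp ((tail N).analyticAt x)) ?_
  refine Finset.analyticAt_fun_sum _ fun k _ => ?_
  refine AnalyticAt.sub ?_ ?_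
  · exact (analyticAt_const.mul ((ev (2 * k)).analyticAt x)).pow k
  · exact (analyticAt_const.mul (((ev (2 * k)).comp (tail N)).analyticAt x)).pow k

lemma exists_two_div_lt {d : ℝ} (hd : 0 < d) : ∃ K : ℕ, ∀ k ≥ K, 2 / ((k : ℝ) + 1) < d := by
  obtain ⟨K, hK⟩ := exists_nat_gt (2 / d)
  refine ⟨K, fun k hk => ?_⟩
  rw [div_lt_iff₀ hd] at hK
  rw [div_lt_iff₀ (by positivity)]
  have : (K : ℝ) ≤ k := by exact_mod_cast hk
  nlinarith

lemma memHb_g : MemHb dom g := by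
  refine ⟨fun x _ => analyticAt_g x, ?_⟩
  rintro A ⟨-, hAb, d, hd, hA⟩
  obtain ⟨R, hR⟩ := hAb.exists_norm_le
  obtain ⟨K, hK⟩ := exists_two_div_lt hd
  refine ⟨∑' k : ℕ, (4 / 5 : ℝ) ^ k * (max R 1) ^ K, fun x hx => ?_⟩
  refine tsum_of_norm_bounded (summable_geom.mul_right _).hasSum fun k => ?_
  rw [norm_term]
  refine mul_le_mul_of_nonneg_left ?_ (by positivity)
  -- On `A`, only the coordinates `2k` with `k < K` can exceed `1`, and these are at most `R`.
  rcases lt_or_ge k K with h | h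
  · calc ‖x (2 * k)‖ ^ k ≤ (max R 1) ^ k :=
          pow_le_pow_left₀ (norm_nonneg _)
            ((norm_apply_le x _).trans ((hR x hx).trans (le_max_left _ _))) _
      _ ≤ (max R 1) ^ K := pow_le_pow_right₀ (le_max_right _ _) h.le
  · exact (pow_le_one₀ (norm_nonneg _) (coord_le_one (hK k h) (hA x hx))).trans
      (one_le_pow₀ (le_max_right _ _))

/-- The summand `1` is the constant term of the series, where `0 ^ 0 = 1`. -/
lemma g_pt {k : ℕ} (hk : k ≠ 0) : g (pt k) = 1 + (6 / 5 : ℂ) ^ k := by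
  rw [g, tsum_eq_sum (s := {0, k}), Finset.sum_pair hk.symm]
  · rw [pow_zero, pt_apply, if_pos rfl]; norm_num
  · intro m hm
    simp only [Finset.mem_insert, Finset.mem_singleton, not_or] at hm
    rw [pt_apply, if_neg (by omega), mul_zero, zero_pow hm.1]

lemma ubounded_pts : UBounded (UhatP dom) (range pt) := by
  refine ⟨?_, ?_, 1 / 2, by norm_num, ?_⟩
  · rintro _ ⟨k, rfl⟩
    exact ball_subset_UhatP k (mem_ball_self (by norm_num))
  · rw [isBounded_iff_forall_norm_le]
    refine ⟨3 / 2, ?_⟩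
    rintro _ ⟨k, rfl⟩
    refine norm_le_of (by norm_num) fun j => ?_
    rw [pt_apply]
    split_ifs <;> norm_num
  · rintro _ ⟨k, rfl⟩
    exact ball_subset_UhatP k


/-! ### Separation from the hulls of the sets `U_n` -/

lemma isHomogPoly_zero (n : ℕ) : IsHomogPoly n (fun _ : Czero => 0) := ⟨0, fun _ => by simp⟩

lemma isContPoly_coord (i : ℕ) : IsContPoly (fun x : Czero => x i) := by
  refine ⟨1, fun k x => if k = 1 then x i else 0, fun k => ?_, fun x => ?_⟩
  · by_cases h : k = 1
    · subst h
      exact ⟨(ContinuousMultilinearMap.mkPiAlgebraFin ℂ 1 ℂ).compContinuousLinearMap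
        fun _ => ev i, fun x => by simp⟩
    · simp only [h, if_false]
      exact isHomogPoly_zero k
  · simp

lemma pt_notMem_hull {n : ℕ} (hn : 0 < n) : ∃ k, pt k ∉ polyHull (UNat dom n) := by
  obtain ⟨K, hK⟩ := exists_two_div_lt (d := 1 / (n : ℝ)) (by positivity)
  refine ⟨K, fun h => ?_⟩
  have h1 := h _ (isContPoly_coord (2 * K)) 1 fun a ha => coord_le_one (hK K le_rfl) ha.2.2
  rw [pt_apply, if_pos rfl] at h1
  norm_num at h1

-- In `UNat` the radius `1 / 0` is `0`, so for `n = 0` the set is contained in `{0}`.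
lemma pt_notMem_hull_zero : pt 0 ∉ polyHull (UNat dom 0) := by
  intro h
  have h1 := h _ (isContPoly_coord (2 * 0)) 1 fun a ha => by
    have h2 := ha.2.1
    have h3 := norm_apply_le a (2 * 0)
    push_cast at h2
    linarith
  rw [pt_apply, if_pos rfl] at h1
  norm_num at h1

lemma not_subset_hull (n : ℕ) : ¬ range pt ⊆ polyHull (UNat dom n) := by
  intro h
  rcases Nat.eq_zero_or_pos n with rfl | hn
  · exact pt_notMem_hull_zero (h ⟨0, rfl⟩)
  · obtain ⟨k, hk⟩ := pt_notMem_hull hn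
    exact hk (h ⟨k, rfl⟩)

/-! ### The extension of `g` to the hull -/

/-- An analytic extension of `g|_U` to `Û_P` agrees with `g` at `(3/2) e_{2k}`: both functions are
analytic near the segment from `0`, and they coincide near `0`. -/
lemma extension_eq {g' : Czero → ℂ} (hg' : AnalyticOnNhd ℂ g' (UhatP dom)) (he : EqOn g' g dom)
    (k : ℕ) : g' (pt k) = g (pt k) := by
  refine AnalyticOnNhd.eqOn_of_preconnected_of_eventuallyEq (hg'.mono (seg_subset_UhatP k))
    (fun x _ => analyticAt_g x) (isPreconnected_seg k) (zero_mem_seg k) ?_ (pt_mem_seg k)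
  filter_upwards [isOpen_dom.mem_nhds (Or.inl (mem_ball_self one_pos))] with y hy
  exact he hy

lemma not_bounded_g : ¬ ∃ C : ℝ, ∀ k, ‖g (pt k)‖ ≤ C := by
  rintro ⟨C, hC⟩
  obtain ⟨k, hk⟩ := pow_unbounded_of_one_lt (max (C + 1) 1) (by norm_num : (1 : ℝ) < 6 / 5)
  obtain ⟨hk1, hk2⟩ := max_lt_iff.1 hk
  have hk0 : k ≠ 0 := by
    rintro rfl
    simp at hk2
  have h1 := hC k
  rw [g_pt hk0] at h1
  have h2 : ‖(6 / 5 : ℂ) ^ k‖ = (6 / 5) ^ k := by rw [norm_pow]; norm_num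
  have h3 := norm_sub_le (1 + (6 / 5 : ℂ) ^ k) 1
  rw [add_sub_cancel_left, h2, norm_one] at h3
  linarith

end Czero

/-- There exist a nonempty balanced open set `U ⊆ c₀` and `g ∈ H_b(U)` whose
(unique) holomorphic extension to `Û_P` is unbounded on some `Û_P`-bounded set; moreover the
sets `(U_n)̂_P` do not form a fundamental system of `Û_P`-bounded sets. -/
theorem stmt_11 :
    ∃ (U : Set (ZeroAtInftyContinuousMap ℕ ℂ)) (g : ZeroAtInftyContinuousMap ℕ ℂ → ℂ),
      U.Nonempty ∧ IsOpen U ∧ Balanced ℂ U ∧ MemHb U g ∧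
      (∀ g' : ZeroAtInftyContinuousMap ℕ ℂ → ℂ,
        AnalyticOnNhd ℂ g' (UhatP U) → Set.EqOn g' g U →
          ∃ A, UBounded (UhatP U) A ∧ ¬ ∃ C : ℝ, ∀ x ∈ A, ‖g' x‖ ≤ C) ∧
      ∃ D, UBounded (UhatP U) D ∧ ∀ n : ℕ, ¬ D ⊆ polyHull (UNat U n) := by
  refine ⟨Czero.dom, Czero.g, ⟨0, Or.inl (mem_ball_self one_pos)⟩, Czero.isOpen_dom,
    Czero.balanced_dom, Czero.memHb_g, fun g' hg' he => ?_,
    range Czero.pt, Czero.ubounded_pts, Czero.not_subset_hull⟩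
  refine ⟨range Czero.pt, Czero.ubounded_pts, ?_⟩
  rintro ⟨C, hC⟩
  refine Czero.not_bounded_g ⟨C, fun k => ?_⟩
  rw [← Czero.extension_eq hg' he k]
  exact hC _ ⟨k, rfl⟩
end

section
/- Let E be a complex Banach space on which there exists a continuous n-homogeneous polynomial (n ≥ 1) that is not weakly continuous on bounded sets. Then there exists a nonempty open set U ⊊ E (a proper subset of E) such that U is H_b(U)-convex and nevertheless, for every x ∈ E, there is a continuous character φ of H_b(U) with φ(γ|_U) = γ(x) for every continuous linear functional γ ∈ E'. -/
/-!
Choose `m` minimal such that some `m`-homogeneous continuous polynomial `Q` fails to be weakly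
continuous on bounded sets, and take `U = {Q ≠ 0}`.

* *`U` is `H_b(U)`-convex.* Restricting `Q` to a line `x + ℂ v` with `Q v ≠ 0` gives a
  one-variable polynomial with leading coefficient `Q v` whose roots stay away from `0` when `x`
  is far from the zero set of `Q`. Hence `1 / Q` is bounded on `U`-bounded sets, that is,
  `1 / Q ∈ H_b(U)` (`inv_memHb`). So `|Q|` is bounded below on the hull of a `U`-bounded set, and
  since `Q` is Lipschitz on balls the hull is uniformly away from the boundary
  (`uBounded_of_le`).
* *Characters over points of the zero set.* By minimality of `m` the mixed terms of the expansion
  of `Q (x + y)` are weakly continuous in `y` on bounded sets, so `Q (x + y) - Q y → Q x` along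
  every bounded weakly null net `y` (`tendsto_shift`). In particular the failure of weak
  continuity somewhere produces a bounded weakly null net `y` with `|Q y| ≥ ε / 2`. If `Q x = 0`,
  then `|Q (x + y)| ≥ ε / 4` eventually, so the points `x + y` eventually form a `U`-bounded set,
  and the limit of `f (x + y)` along an ultrafilter is a character which agrees with evaluation
  at `x` on every continuous linear functional.
-/

open Set Metric

variable {E : Type*} [NormedAddCommGroup E] [NormedSpace ℂ E]

/-- `P` is weakly continuous on bounded sets: for every `R > 0` its restriction to the closed
ball of radius `R` is continuous for the weak topology `σ(E,E')` (expressed via the basic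
weak neighbourhoods, given by finitely many functionals). -/
def WeaklyContOnBounded {E : Type*} [NormedAddCommGroup E] [NormedSpace ℂ E]
    (P : E → ℂ) : Prop :=
  ∀ R > (0 : ℝ), ∀ x : E, ‖x‖ ≤ R → ∀ ε > (0 : ℝ),
    ∃ (s : Finset (E →L[ℂ] ℂ)) (δ : ℝ), 0 < δ ∧
      ∀ y : E, ‖y‖ ≤ R → (∀ γ ∈ s, ‖γ y - γ x‖ < δ) → ‖P y - P x‖ < ε

open Filter Topology

/-! ### Continuous homogeneous polynomials -/

/-- Freezing some of the variables of an `m`-linear map leaves a homogeneous polynomial. -/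
lemma isHomogPoly_piecewise {m : ℕ} (M : ContinuousMultilinearMap ℂ (fun _ : Fin m => E) ℂ)
    (s : Finset (Fin m)) (x : E) :
    IsHomogPoly (sᶜ).card (fun y => M (s.piecewise (fun _ => x) (fun _ => y))) := by
  refine ⟨M.restr sᶜ rfl x, fun y => ?_⟩
  change _ = M (fun j => if j ∈ sᶜ then y else x)
  refine congrArg M (funext fun j => ?_)
  by_cases h : j ∈ s <;> simp [h]

lemma IsHomogPoly.apply_zero {m : ℕ} (hm : m ≠ 0) {Q : E → ℂ} (hQ : IsHomogPoly m Q) :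
    Q 0 = 0 := by
  obtain ⟨M, hM⟩ := hQ
  rw [hM]
  exact M.map_coord_zero ⟨0, Nat.pos_of_ne_zero hm⟩ rfl

lemma IsHomogPoly.analyticOnNhd {m : ℕ} {Q : E → ℂ} (hQ : IsHomogPoly m Q) (U : Set E) :
    AnalyticOnNhd ℂ Q U := by
  obtain ⟨M, hM⟩ := hQ
  obtain rfl : Q = fun x => M fun _ => x := funext hM
  intro x _
  exact (M.analyticOnNhd (s := univ) (fun _ => x) trivial).comp
    ((ContinuousLinearMap.pi fun _ : Fin m => ContinuousLinearMap.id ℂ E).analyticAt x)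

/-- A homogeneous polynomial is Lipschitz on bounded sets. -/
lemma IsHomogPoly.lipschitz {m : ℕ} {Q : E → ℂ} (hQ : IsHomogPoly m Q) (K : ℝ) (hK : 0 ≤ K) :
    ∃ L > 0, ∀ x y : E, ‖x‖ ≤ K → ‖y‖ ≤ K → ‖Q x - Q y‖ ≤ L * ‖x - y‖ := by
  obtain ⟨M, hM⟩ := hQ
  refine ⟨‖M‖ * m * K ^ (m - 1) + 1, by positivity, fun x y hx hy => ?_⟩
  have h := M.norm_image_sub_le (fun _ => x) (fun _ => y)
  rw [← hM, ← hM, Fintype.card_fin] at h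
  have h1 : ‖(fun _ : Fin m => x)‖ ≤ K := (pi_norm_const_le x).trans hx
  have h2 : ‖(fun _ : Fin m => y)‖ ≤ K := (pi_norm_const_le y).trans hy
  have h3 : ‖(fun _ : Fin m => x) - (fun _ => y)‖ ≤ ‖x - y‖ :=
    pi_norm_const_le (ι := Fin m) (x - y)
  have h4 : max ‖(fun _ : Fin m => x)‖ ‖(fun _ : Fin m => y)‖ ≤ K := max_le h1 h2
  calc ‖Q x - Q y‖ ≤ _ := h
    _ ≤ ‖M‖ * m * K ^ (m - 1) * ‖x - y‖ := by gcongr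
    _ ≤ _ := by gcongr; linarith

/-- A bounded set on which `|Q|` is bounded below is uniformly away from the zeros of `Q`. -/
lemma uBounded_of_le {m : ℕ} {Q : E → ℂ} (hQ : IsHomogPoly m Q) {A : Set E} {K c : ℝ}
    (hc : 0 < c) (hA : ∀ a ∈ A, ‖a‖ ≤ K ∧ c ≤ ‖Q a‖) : UBounded {x | Q x ≠ 0} A := by
  have hsub : A ⊆ {x | Q x ≠ 0} := fun a ha => norm_pos_iff.1 (hc.trans_le (hA a ha).2)
  refine ⟨hsub, isBounded_iff_forall_norm_le.2 ⟨K, fun a ha => (hA a ha).1⟩, ?_⟩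
  obtain ⟨L, hL, hlip⟩ := hQ.lipschitz (|K| + 1) (by positivity)
  refine ⟨min 1 (c / L), by positivity, fun a ha b hb hb0 => ?_⟩
  rw [mem_ball, dist_eq_norm, lt_min_iff, lt_div_iff₀ hL] at hb
  have haK : ‖a‖ ≤ |K| := (hA a ha).1.trans (le_abs_self K)
  have hbK : ‖b‖ ≤ |K| + 1 := by
    have := norm_le_norm_add_norm_sub' b a
    linarith [hb.1]
  have h := hlip b a hbK (by linarith)
  rw [hb0, zero_sub, norm_neg] at h
  linarith [(hA a ha).2, hb.2, mul_comm L ‖b - a‖]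

/-- The restriction of `Q` to the line `x + ℂ v` is a polynomial of degree at most `m` whose
coefficient of degree `m` is `Q v`. -/
lemma IsHomogPoly.exists_line {m : ℕ} {Q : E → ℂ} (hQ : IsHomogPoly m Q) (x v : E) :
    ∃ p : Polynomial ℂ, (∀ t, p.eval t = Q (x + t • v)) ∧ p.natDegree ≤ m ∧ p.coeff m = Q v := by
  obtain ⟨M, hM⟩ := hQ
  refine ⟨∑ s : Finset (Fin m), Polynomial.C (M (s.piecewise (fun _ => v) (fun _ => x))) *
    Polynomial.X ^ s.card, fun t => ?_, ?_, ?_⟩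
  · rw [hM, add_comm]
    have h := M.map_add_univ (fun _ => t • v) (fun _ => x)
    rw [show (fun _ : Fin m => t • v + x) = (fun _ => t • v) + (fun _ => x) from rfl, h,
      Polynomial.eval_finsetSum]
    refine Finset.sum_congr rfl fun s _ => ?_
    have h2 := M.map_piecewise_smul (fun _ => t) (s.piecewise (fun _ => v) (fun _ => x)) s
    have h3 : s.piecewise (fun i => t • s.piecewise (fun _ => v) (fun _ => x) i)
        (s.piecewise (fun _ => v) (fun _ => x)) =
        s.piecewise (fun _ : Fin m => t • v) (fun _ => x) := by
      ext j
      by_cases h : j ∈ s <;> simp [h]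
    rw [h3] at h2
    rw [h2]
    rw [Finset.prod_const, smul_eq_mul, Polynomial.eval_mul, Polynomial.eval_C,
      Polynomial.eval_pow, Polynomial.eval_X, mul_comm]
  · refine Polynomial.natDegree_sum_le_of_forall_le _ _ fun s _ => ?_
    exact (Polynomial.natDegree_C_mul_X_pow_le _ _).trans (card_finset_fin_le s)
  · rw [Polynomial.finsetSum_coeff, Finset.sum_eq_single Finset.univ, hM]
    · simp
    · intro s _ hs
      have : s.card ≠ m := fun h => hs ((Finset.card_eq_iff_eq_univ s).1 (by simpa using h))
      rw [Polynomial.coeff_C_mul_X_pow, if_neg this.symm]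
    · simp

/-! ### Convexity of the complement of the zero set -/

/-- If all roots of `p` have modulus at least `r`, then `|p 0| ≥ |lc p| * r ^ deg p`. -/
lemma le_norm_eval_zero (p : Polynomial ℂ) {r : ℝ} (hr : 0 ≤ r)
    (h : ∀ t, p.IsRoot t → r ≤ ‖t‖) :
    ‖p.leadingCoeff‖ * r ^ p.natDegree ≤ ‖p.eval 0‖ := by
  by_cases hp : p = 0
  · simp [hp]
  have hs := IsAlgClosed.splits p
  rw [hs.eval_eq_prod_roots, norm_mul, hs.natDegree_eq_card_roots]
  gcongr
  have key : ∀ S : Multiset ℂ, (∀ t ∈ S, r ≤ ‖t‖) →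
      r ^ S.card ≤ ‖(S.map fun a => 0 - a).prod‖ := by
    intro S
    induction S using Multiset.induction with
    | empty => simp
    | cons a S ih =>
      intro hS
      rw [Multiset.card_cons, Multiset.map_cons, Multiset.prod_cons, norm_mul, pow_succ', zero_sub,
        norm_neg]
      exact mul_le_mul (hS a (by simp)) (ih fun t ht => hS t (by simp [ht])) (by positivity)
        (norm_nonneg _)
  exact key _ fun t ht => h t (Polynomial.isRoot_of_mem_roots ht)

/-- The reciprocal of `Q` lies in `H_b(U)` for `U = {Q ≠ 0}`. -/
lemma inv_memHb {m : ℕ} {Q : E → ℂ} (hQ : IsHomogPoly m Q) {v : E} (hv : Q v ≠ 0) :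
    MemHb {x | Q x ≠ 0} (fun x => (Q x)⁻¹) := by
  refine ⟨(hQ.analyticOnNhd _).inv fun x hx => hx, fun A hA => ?_⟩
  obtain ⟨-, -, d, hd, hball⟩ := hA
  -- The `+ 1` avoids treating `v = 0` (possible when `m = 0`) separately.
  set r := d / (‖v‖ + 1) with hrdef
  have hr : 0 < r := by positivity
  refine ⟨(‖Q v‖ * r ^ m)⁻¹, fun x hx => ?_⟩
  obtain ⟨p, hp, hdeg, hlc⟩ := hQ.exists_line x v
  have hdeg' : p.natDegree = m :=
    le_antisymm hdeg (Polynomial.le_natDegree_of_ne_zero (by rwa [hlc]))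
  have h := le_norm_eval_zero p hr.le fun t ht => ?_
  · rw [Polynomial.leadingCoeff, hdeg', hlc, hp, zero_smul, add_zero] at h
    rw [norm_inv]
    have : 0 < ‖Q v‖ := norm_pos_iff.2 hv
    gcongr
  · by_contra! hlt
    rw [hrdef, lt_div_iff₀ (by positivity)] at hlt
    refine hball x hx (?_ : x + t • v ∈ ball x d) ((hp t).symm.trans ht)
    rw [mem_ball, dist_eq_norm, add_sub_cancel_left, norm_smul]
    nlinarith [norm_nonneg t]

lemma clm_memHb (U : Set E) (γ : E →L[ℂ] ℂ) : MemHb U (fun e => γ e) := by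
  refine ⟨fun x _ => γ.analyticAt x, fun A hA => ?_⟩
  obtain ⟨K, hK⟩ := isBounded_iff_forall_norm_le.1 hA.2.1
  exact ⟨‖γ‖ * K, fun x hx => γ.le_of_opNorm_le_of_le le_rfl (hK x hx)⟩

lemma hbConvex_ne_zero {m : ℕ} {Q : E → ℂ} (hQ : IsHomogPoly m Q) {v : E} (hv : Q v ≠ 0) :
    HbConvex {x | Q x ≠ 0} := by
  intro A hA
  obtain ⟨K, hK⟩ := isBounded_iff_forall_norm_le.1 hA.2.1
  obtain ⟨C, hC⟩ := (inv_memHb hQ hv).2 A hA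
  refine uBounded_of_le hQ (K := K) (c := (|C| + 1)⁻¹) (by positivity) ?_
  rintro x ⟨hxU, hx⟩
  constructor
  · obtain ⟨γ, hγ, hγx⟩ := exists_dual_vector'' ℂ x
    have := hx _ (clm_memHb _ γ) K fun a ha =>
      (γ.le_of_opNorm_le_of_le hγ (hK a ha)).trans_eq (one_mul K)
    simpa [hγx] using this
  · have h := hx _ (inv_memHb hQ hv) C hC
    have hpos : 0 < ‖Q x‖ := norm_pos_iff.2 hxU
    rw [norm_inv] at h
    exact inv_le_of_inv_le₀ hpos (h.trans (by linarith [le_abs_self C]))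

/-! ### Bounded weakly null nets -/

/-- Weak continuity on bounded sets gives convergence along bounded weakly null families. -/
lemma WeaklyContOnBounded.tendsto {R : E → ℂ} (hR : WeaklyContOnBounded R) {ι : Type*}
    {l : Filter ι} {y : ι → E} {K : ℝ} (hK : ∀ i, ‖y i‖ ≤ K)
    (hy : ∀ γ : E →L[ℂ] ℂ, Tendsto (fun i => γ (y i)) l (𝓝 0)) :
    Tendsto (fun i => R (y i)) l (𝓝 (R 0)) := by
  rw [Metric.tendsto_nhds]
  intro ε hε
  obtain ⟨s, δ, hδ, h⟩ := hR (|K| + 1) (by positivity) 0 (by rw [norm_zero]; positivity) ε hε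
  have hev : ∀ᶠ i in l, ∀ γ ∈ s, ‖γ (y i)‖ < δ := by
    rw [Filter.eventually_all_finset]
    intro γ _
    simpa using (Metric.tendsto_nhds.1 (hy γ)) δ hδ
  filter_upwards [hev] with i hi
  rw [dist_eq_norm]
  exact h _ ((hK i).trans (by linarith [le_abs_self K])) fun γ hγ => by simpa using hi γ hγ

/-- If all homogeneous polynomials of degree less than `m` are weakly continuous on bounded sets,
then an `m`-homogeneous polynomial is asymptotically additive along bounded weakly null families:
the mixed terms in the expansion of `Q (x + y)` tend to `0`. -/
lemma tendsto_shift {m : ℕ} (hm : m ≠ 0)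
    (hlow : ∀ k < m, ∀ R : E → ℂ, IsHomogPoly k R → WeaklyContOnBounded R)
    {Q : E → ℂ} (hQ : IsHomogPoly m Q) {ι : Type*}
    {l : Filter ι} {y : ι → E} {K : ℝ} (hK : ∀ i, ‖y i‖ ≤ K)
    (hy : ∀ γ : E →L[ℂ] ℂ, Tendsto (fun i => γ (y i)) l (𝓝 0)) (x : E) :
    Tendsto (fun i => Q (x + y i) - Q (y i)) l (𝓝 (Q x)) := by
  obtain ⟨M, hM⟩ := hQ
  have huniv : (Finset.univ : Finset (Fin m)) ≠ ∅ := by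
    intro h
    have := congrArg Finset.card h
    simp at this
    exact hm this
  have hexp : ∀ i, Q (x + y i) - Q (y i) = ∑ s : Finset (Fin m),
      if s = ∅ then 0 else M (s.piecewise (fun _ => x) (fun _ => y i)) := by
    intro i
    rw [hM, hM, show (fun _ : Fin m => x + y i) = (fun _ => x) + (fun _ => y i) from rfl,
      M.map_add_univ, ← Finset.sum_erase_add _ _ (Finset.mem_univ ∅),
      ← Finset.sum_erase_add (a := (∅ : Finset (Fin m))) _ _ (Finset.mem_univ ∅), if_pos rfl,
      Finset.piecewise_empty, add_sub_cancel_right, add_zero]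
    exact Finset.sum_congr rfl fun s hs => (if_neg (Finset.ne_of_mem_erase hs)).symm
  have hlim : Q x = ∑ s : Finset (Fin m), if s = Finset.univ then Q x else 0 := by simp
  rw [hlim]
  simp_rw [hexp]
  refine tendsto_finsetSum _ fun s _ => ?_
  by_cases h0 : s = ∅
  · simpa [h0, huniv.symm] using tendsto_const_nhds
  by_cases h1 : s = Finset.univ
  · subst h1
    simpa only [if_neg huniv, if_true, hM, Finset.piecewise_univ] using tendsto_const_nhds
  simp only [h0, h1, if_false]
  have hhom := isHomogPoly_piecewise M s x
  have hne : (sᶜ).card ≠ 0 := by simpa [Finset.card_eq_zero] using h1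
  have hlt : (sᶜ).card < m := by
    have := Finset.card_pos.2 (Finset.nonempty_iff_ne_empty.2 h0)
    have h2 := Finset.card_add_card_compl s
    rw [Fintype.card_fin] at h2
    lia
  have h := (hlow _ hlt _ hhom).tendsto hK hy
  rwa [hhom.apply_zero hne] at h

/-- Failure of weak continuity yields a point `x₀` and a bounded weakly null net `y` such that
`Q (x₀ + y)` stays away from `Q x₀`. The index `(s, k)` stands for the basic weak neighbourhood
given by the functionals in `s` and the radius `1 / (k + 1)`. -/
lemma exists_net {Q : E → ℂ} (h : ¬ WeaklyContOnBounded Q) :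
    ∃ (x₀ : E) (ε K : ℝ) (y : Finset (E →L[ℂ] ℂ) × ℕ → E), 0 < ε ∧ (∀ i, ‖y i‖ ≤ K) ∧
      (∀ γ : E →L[ℂ] ℂ, Tendsto (fun i => γ (y i)) atTop (𝓝 0)) ∧
      ∀ i, ε ≤ ‖Q (x₀ + y i) - Q x₀‖ := by
  unfold WeaklyContOnBounded at h
  push Not at h
  obtain ⟨R, hR, x₀, hx₀, ε, hε, h⟩ := h
  choose a ha1 ha2 ha3 using fun i : Finset (E →L[ℂ] ℂ) × ℕ =>
    h i.1 (1 / ((i.2 : ℝ) + 1)) (by positivity)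
  refine ⟨x₀, ε, R + R, fun i => a i - x₀, hε, fun i => ?_, fun γ => ?_, fun i => ?_⟩
  · exact (norm_sub_le _ _).trans (add_le_add (ha1 i) hx₀)
  · rw [Metric.tendsto_nhds]
    intro δ hδ
    obtain ⟨N, hN⟩ := exists_nat_one_div_lt hδ
    filter_upwards [eventually_ge_atTop (({γ}, N) : Finset (E →L[ℂ] ℂ) × ℕ)] with i hi
    rw [dist_zero_right, map_sub]
    refine (ha2 i γ (hi.1 (by simp))).trans (lt_of_le_of_lt ?_ hN)
    have : (N : ℝ) ≤ i.2 := by exact_mod_cast hi.2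
    gcongr
  · simpa using ha3 i

/-! ### Characters as limits of evaluations -/

/-- The limit of evaluations along an ultrafilter is a character, provided the points lie
eventually in a fixed `U`-bounded set. -/
lemma isHbChar_limUnder {U B : Set E} (hB : UBounded U B) {ι : Type*} (u : Ultrafilter ι)
    {z : ι → E} (hz : ∀ᶠ i in (u : Filter ι), z i ∈ B) :
    IsHbChar U (fun f => limUnder (u : Filter ι) fun i => f (z i)) := by
  have hlim : ∀ f, MemHb U f → ∃ a, Tendsto (fun i => f (z i)) u (𝓝 a) := by
    intro f hf
    obtain ⟨C, hC⟩ := hf.2 B hB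
    have hle : ((u.map fun i => f (z i) : Ultrafilter ℂ) : Filter ℂ) ≤ 𝓟 (closedBall 0 C) := by
      rw [le_principal_iff, Ultrafilter.mem_coe, Ultrafilter.mem_map]
      filter_upwards [hz] with i hi
      simpa using hC _ hi
    obtain ⟨a, -, ha⟩ := (isCompact_closedBall (0 : ℂ) C).ultrafilter_le_nhds _ hle
    exact ⟨a, ha⟩
  refine ⟨tendsto_const_nhds.limUnder_eq, fun f g hf hg => ?_, fun c f hf => ?_,
    fun f g hf hg => ?_, B, hB, fun f hf C hC => ?_⟩
  · obtain ⟨a, ha⟩ := hlim f hf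
    obtain ⟨b, hb⟩ := hlim g hg
    exact (ha.add hb).limUnder_eq.trans (by simp only [ha.limUnder_eq, hb.limUnder_eq])
  · obtain ⟨a, ha⟩ := hlim f hf
    exact (ha.const_mul c).limUnder_eq.trans (by simp only [ha.limUnder_eq])
  · obtain ⟨a, ha⟩ := hlim f hf
    obtain ⟨b, hb⟩ := hlim g hg
    exact (ha.mul hb).limUnder_eq.trans (by simp only [ha.limUnder_eq, hb.limUnder_eq])
  · obtain ⟨a, ha⟩ := hlim f hf
    have h : ‖a‖ ≤ C := le_of_tendsto ha.norm (hz.mono fun i hi => hC _ hi)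
    exact (congrArg norm ha.limUnder_eq).trans_le h

/-- If there is a continuous `n`-homogeneous polynomial (`n ≥ 1`) on `E` not
weakly continuous on bounded sets, then there is a nonempty proper open `H_b(U)`-convex set
`U ⊊ E` such that every point `x ∈ E` admits a continuous character of `H_b(U)` agreeing with
evaluation at `x` on all continuous linear functionals. -/
theorem stmt_15 {E : Type*} [NormedAddCommGroup E] [NormedSpace ℂ E] [CompleteSpace E]
    (n : ℕ) (hn : 1 ≤ n) (P : E → ℂ) (hP : IsHomogPoly n P)
    (hw : ¬ WeaklyContOnBounded P) :
    ∃ U : Set E, IsOpen U ∧ U.Nonempty ∧ U ≠ Set.univ ∧ HbConvex U ∧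
      ∀ x : E, ∃ φ : (E → ℂ) → ℂ, IsHbChar U φ ∧
        ∀ γ : E →L[ℂ] ℂ, φ (fun e => γ e) = γ x := by
  classical
  have hex : ∃ m, ∃ Q : E → ℂ, IsHomogPoly m Q ∧ ¬ WeaklyContOnBounded Q := ⟨n, P, hP, hw⟩
  obtain ⟨Q, hQ, hQw⟩ := Nat.find_spec hex
  have hlow : ∀ k < Nat.find hex, ∀ R : E → ℂ, IsHomogPoly k R → WeaklyContOnBounded R :=
    fun k hk R hR => by_contra fun h => Nat.find_min hex hk ⟨R, hR, h⟩
  set m := Nat.find hex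
  obtain ⟨x₀, ε, K, y, hε, hK, hy, hfar⟩ := exists_net hQw
  have hm : m ≠ 0 := by
    intro h0
    obtain ⟨M, hM⟩ := hQ
    have : IsEmpty (Fin m) := by rw [h0]; infer_instance
    have heq : (fun _ : Fin m => x₀ + y (∅, 0)) = fun _ => x₀ := Subsingleton.elim _ _
    have := hfar (∅, 0)
    rw [hM, hM, heq, sub_self, norm_zero] at this
    linarith
  -- Comparing at `x₀` transfers the failure of weak continuity to the origin.
  have hlarge : ∀ᶠ i in atTop, ε / 2 ≤ ‖Q (y i)‖ := by
    have h := Metric.tendsto_nhds.1 (tendsto_shift hm hlow hQ hK hy x₀) (ε / 2) (by positivity)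
    filter_upwards [h] with i hi
    rw [dist_eq_norm] at hi
    have h1 := norm_le_norm_add_norm_sub' (Q (x₀ + y i) - Q x₀) (Q (y i))
    rw [show Q (x₀ + y i) - Q x₀ - Q (y i) = Q (x₀ + y i) - Q (y i) - Q x₀ by ring] at h1
    linarith [hfar i]
  obtain ⟨i₀, hi₀⟩ := hlarge.exists
  have hv : Q (y i₀) ≠ 0 := norm_pos_iff.1 (by linarith)
  refine ⟨{x | Q x ≠ 0}, ?_, ⟨_, hv⟩, ?_, hbConvex_ne_zero hQ hv, fun x => ?_⟩
  · exact isOpen_ne_fun (continuousOn_univ.1 (hQ.analyticOnNhd univ).continuousOn)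
      continuous_const
  · exact (ne_univ_iff_exists_notMem _).2 ⟨0, by simp [hQ.apply_zero hm]⟩
  by_cases hx : Q x = 0
  · have hB : UBounded {x | Q x ≠ 0} {z | ‖z‖ ≤ ‖x‖ + K ∧ ε / 4 ≤ ‖Q z‖} :=
      uBounded_of_le hQ (K := ‖x‖ + K) (c := ε / 4) (by positivity) fun a ha => ha
    set u := Ultrafilter.of (atTop : Filter (Finset (E →L[ℂ] ℂ) × ℕ))
    have hu : (u : Filter (Finset (E →L[ℂ] ℂ) × ℕ)) ≤ atTop := Ultrafilter.of_le _
    have hz : ∀ᶠ i in (u : Filter (Finset (E →L[ℂ] ℂ) × ℕ)),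
        x + y i ∈ {z | ‖z‖ ≤ ‖x‖ + K ∧ ε / 4 ≤ ‖Q z‖} := by
      refine hu ?_
      have h := Metric.tendsto_nhds.1 (tendsto_shift hm hlow hQ hK hy x) (ε / 4) (by positivity)
      filter_upwards [h, hlarge] with i hi hi2
      refine ⟨(norm_add_le _ _).trans (by linarith [hK i]), ?_⟩
      rw [hx, dist_zero_right] at hi
      have h1 := norm_le_norm_add_norm_sub (Q (x + y i)) (Q (y i))
      linarith
    refine ⟨_, isHbChar_limUnder hB u hz, fun γ => Tendsto.limUnder_eq ?_⟩
    simpa using (tendsto_const_nhds (x := γ x)).add ((hy γ).mono_left hu)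
  · refine ⟨fun f => f x, ⟨rfl, fun _ _ _ _ => rfl, fun _ _ _ => rfl, fun _ _ _ _ => rfl, {x},
      ?_, fun f _ C hC => hC x rfl⟩, fun γ => rfl⟩
    refine uBounded_of_le hQ (K := ‖x‖) (c := ‖Q x‖) (norm_pos_iff.2 hx) ?_
    rintro a rfl
    exact ⟨le_rfl, le_rfl⟩
end
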